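/- Fix 0 < a < 1, and suppose that for each natural number m a number B_m > 0 and a map φ_m are given such that φ_m is a continuous map from the closure of Q to the closure of Ω_{B_m,m} restricting to a holomorphic bijection from Q onto Ω_{B_m,m}, with |φ_m(z)| → ∞ as |z| → ∞ in Q, φ_m(0) = i·B_m, φ_m(a) = 0, and φ_m(1) = π(m+1). Then B_m = (m + 1/2)·log((1+a)/(1−a)) + (1/2)·log m + (1/2)·log(2a/(1−a²)) + (1/2)·log(2π) + o(1) as m → ∞. -/

import Mathlib

/-!
Fix `m` and write `φ`, `B` for `φ_m`, `B_m`. On the curved part of `∂Ω_{B,m}` one has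
`Re (cos w) = cosh B`, and on the rest of the boundary `cos w` is real on the segment `[0, iB]`, the
bottom and the right side. The normalization of `φ` fixes which part of `∂Q` is sent where
(`NormalizedMap.fiber` and the lemmas on `corr`), so `cosh B - cos φ` is imaginary on the imaginary
axis and real on the real axis. Schwarz reflection extends it to an odd entire function. Properness
of `φ` makes this function tend to infinity at infinity, so it is a polynomial, and following the
argument of `exp (-iφ)` along large quarter circles bounds its degree by `2(m+1)`
(`NormalizedMap.exists_polynomial`).

Divided by `cosh B`, this is an odd polynomial which on `[a, 1]` has the form `1 - L cos Φ`, where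
`L = 1 / cosh B` and `Φ = φ` goes from `0` to `π(m+1)`. Hence `L` is the error of the best
approximation of `1` on `[a, 1]` by odd polynomials of degree at most `2(m+1)`, and it can be compared
with any other almost equioscillating competitor. Such a competitor comes from the substitution
`x = ½(1+a)|1 + ρ e^{iθ}|` with `ρ = (1-a)/(1+a)`, which maps `[0, π]` onto `[a, 1]`: the product of
`|1 + ρ e^{iθ}|` with the truncated Fourier series of `1 / |1 + ρ e^{iθ}|` is an odd polynomial in `x`
(`trial_poly`). The Fourier coefficients `± ac ρ n` decay almost geometrically, so that the error is a
cosine of amplitude `2 * ac ρ (m+1)` up to a relative error `O(1/m)` (`tail_est`). Counting zeros of the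
difference (`no_alt`, `comparison`) gives `1 / cosh B = 2 * ac ρ (m+1) * (1 + O(1/m))`.

Finally `ac ρ n ~ ρ ^ n / √(π n (1 - ρ ^ 2))`, by dominated comparison and the Wallis product, and
taking logarithms gives the expansion (`final_asymp`).
-/

open Filter Set

/-- The open first quadrant. -/
def Q : Set ℂ := {z | 0 < z.re ∧ 0 < z.im}

/-- The boundary function of the regions `Ω_B` and `Ω_{B,m}`. -/
noncomputable def gB (B y : ℝ) : ℝ :=
  if y ≤ B then 0 else Real.arccos (Real.cosh B / Real.cosh y)

/-- The region `Ω_{B,m}`. -/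
noncomputable def ΩBm (B : ℝ) (m : ℕ) : Set ℂ :=
  {z | 0 < z.im ∧ gB B z.im < z.re ∧ z.re < Real.pi * (m + 1)}

/-! ### Taylor coefficients of the inverse square root -/

/-- The numbers `C(2n, n) / 4ⁿ`, i.e. the Taylor coefficients of `(1 - z) ^ (-1/2)`, encoded by
their recursion. -/
noncomputable def bc : ℕ → ℝ
  | 0 => 1
  | n + 1 => bc n * ((2 * n + 1) / (2 * n + 2))

lemma bc_pos (n : ℕ) : 0 < bc n := by
  induction n with
  | zero => simp [bc]
  | succ n ih => rw [bc]; positivity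

lemma bc_rec (n : ℕ) : (2 * n + 2) * bc (n + 1) = (2 * n + 1) * bc n := by
  rw [bc]; field_simp

lemma bc_succ_le (n : ℕ) : bc (n + 1) ≤ bc n := by
  have := bc_rec n
  have := bc_pos n
  have := bc_pos (n + 1)
  have hn : (0 : ℝ) ≤ n := n.cast_nonneg
  nlinarith

lemma bc_anti : Antitone bc := antitone_nat_of_succ_le bc_succ_le

lemma bc_le_one (n : ℕ) : bc n ≤ 1 := by
  simpa [bc] using bc_anti (Nat.zero_le n)

/-- The coefficients decay slowly: shifting the index by `n` costs at most a relative
`n / (2N + 2)`. This is what makes the Fourier tails below almost geometric. -/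
lemma bc_lower (N n : ℕ) : bc N * (1 - n / (2 * N + 2)) ≤ bc (N + n) := by
  induction n with
  | zero => simp
  | succ n ih =>
    have h1 := bc_rec (N + n)
    have h2 := bc_pos (N + n)
    have h3 := bc_anti (Nat.le_add_right N n)
    have : bc (N + n) - bc (N + (n + 1)) ≤ bc N / (2 * N + 2) := by
      have e : bc (N + n) - bc (N + (n + 1)) = bc (N + n) / (2 * (N + n : ℕ) + 2) := by
        rw [← add_assoc]
        field_simp
        linarith
      rw [e]
      have := bc_pos N
      gcongr
      omega
    push_cast
    have e2 : bc N * (1 - (n + 1) / (2 * N + 2)) = bc N * (1 - n / (2 * N + 2)) - bc N / (2 * N + 2) := by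
      field_simp
      ring
    linarith

/-- Link with the Wallis partial products, which yields `bc n ~ 1 / √(π n)`. -/
lemma bc_sq (n : ℕ) : bc n ^ 2 * (2 * n + 1) * Real.Wallis.W n = 1 := by
  induction n with
  | zero => simp [bc, Real.Wallis.W]
  | succ n ih =>
    have e : bc (n + 1) ^ 2 * (2 * (n + 1 : ℕ) + 1) * Real.Wallis.W (n + 1)
        = bc n ^ 2 * (2 * n + 1) * Real.Wallis.W n := by
      rw [Real.Wallis.W_succ, bc]
      push_cast
      field_simp
      ring
    rw [e, ih]

/-- The Cauchy square of the sequence `bc` is constant `1`. With weights `i` and `j` exchanged by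
symmetry, the first moment of the convolution is `n / 2` times the convolution, and the recursion
of `bc` turns this into an induction on `n`. -/
lemma bc_conv (n : ℕ) : ∑ ij ∈ Finset.HasAntidiagonal.antidiagonal n, bc ij.1 * bc ij.2 = 1 := by
  have key : ∀ n : ℕ, ∑ ij ∈ Finset.HasAntidiagonal.antidiagonal n, (ij.1 : ℝ) * (bc ij.1 * bc ij.2)
      = n / 2 * ∑ ij ∈ Finset.HasAntidiagonal.antidiagonal n, bc ij.1 * bc ij.2 := by
    intro n
    have h1 : ∑ ij ∈ Finset.HasAntidiagonal.antidiagonal n, (ij.1 : ℝ) * (bc ij.1 * bc ij.2)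
        = ∑ ij ∈ Finset.HasAntidiagonal.antidiagonal n, (ij.2 : ℝ) * (bc ij.1 * bc ij.2) := by
      rw [← Finset.Nat.sum_antidiagonal_swap]
      refine Finset.sum_congr rfl fun ij _ => ?_
      simp only [Prod.fst_swap, Prod.snd_swap]
      ring
    have h2 : ∑ ij ∈ Finset.HasAntidiagonal.antidiagonal n, (ij.1 : ℝ) * (bc ij.1 * bc ij.2)
        + ∑ ij ∈ Finset.HasAntidiagonal.antidiagonal n, (ij.2 : ℝ) * (bc ij.1 * bc ij.2)
        = n * ∑ ij ∈ Finset.HasAntidiagonal.antidiagonal n, bc ij.1 * bc ij.2 := by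
      rw [← Finset.sum_add_distrib, Finset.mul_sum]
      refine Finset.sum_congr rfl fun ij h => ?_
      rw [← Finset.HasAntidiagonal.mem_antidiagonal.mp h]
      push_cast; ring
    linarith
  induction n with
  | zero => simp [bc]
  | succ n ih =>
    have h1 := key (n + 1)
    have h2 := key n
    rw [Finset.Nat.sum_antidiagonal_succ (f := fun ij => (ij.1 : ℝ) * (bc ij.1 * bc ij.2))] at h1
    simp only [Nat.cast_zero, zero_mul, zero_add] at h1
    have h3 : ∑ x ∈ Finset.HasAntidiagonal.antidiagonal n, ((x.1 + 1 : ℕ) : ℝ) * (bc (x.1 + 1) * bc x.2)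
      = ∑ ij ∈ Finset.HasAntidiagonal.antidiagonal n, (ij.1 : ℝ) * (bc ij.1 * bc ij.2)
        + 1 / 2 * ∑ ij ∈ Finset.HasAntidiagonal.antidiagonal n, bc ij.1 * bc ij.2 := by
      rw [Finset.mul_sum, ← Finset.sum_add_distrib]
      refine Finset.sum_congr rfl fun ij _ => ?_
      have := bc_rec ij.1
      push_cast
      linear_combination (bc ij.2 / 2) * this
    rw [h3, h2, ih] at h1
    push_cast at h1
    have : (n + 1 : ℝ) ≠ 0 := by positivity
    field_simp at h1
    linarith

/-- The series with coefficients `bc` is a square root of `1 / (1 - z)` on the unit disc; no branch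
of the root has to be chosen. -/
lemma bc_series_sq {z : ℂ} (hz : ‖z‖ < 1) :
    Summable (fun j => ‖(bc j : ℂ) * z ^ j‖) ∧ (∑' j, (bc j : ℂ) * z ^ j) ^ 2 = 1 / (1 - z) := by
  have hs : Summable (fun j => ‖(bc j : ℂ) * z ^ j‖) := by
    refine Summable.of_nonneg_of_le (fun _ => norm_nonneg _) (fun j => ?_)
      (summable_geometric_of_lt_one (norm_nonneg z) hz)
    rw [norm_mul, norm_pow, Complex.norm_real, Real.norm_of_nonneg (bc_pos j).le]
    exact mul_le_of_le_one_left (by positivity) (bc_le_one j)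
  refine ⟨hs, ?_⟩
  rw [sq, tsum_mul_tsum_eq_tsum_sum_antidiagonal_of_summable_norm hs hs, one_div,
    ← tsum_geometric_of_norm_lt_one hz]
  refine tsum_congr fun n => ?_
  have : ∑ kl ∈ Finset.HasAntidiagonal.antidiagonal n, (bc kl.1 : ℂ) * z ^ kl.1 * ((bc kl.2 : ℂ) * z ^ kl.2)
      = ∑ kl ∈ Finset.HasAntidiagonal.antidiagonal n, ((bc kl.1 * bc kl.2 : ℝ) : ℂ) * z ^ n := by
    refine Finset.sum_congr rfl fun ij h => ?_
    rw [← Finset.HasAntidiagonal.mem_antidiagonal.mp h]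
    push_cast; ring
  rw [this, ← Finset.sum_mul, ← Complex.ofReal_sum, bc_conv]
  simp

/-! ### Fourier coefficients of the weight and their asymptotics -/

/-- Up to the sign `(-1) ^ n`, the `n`-th Fourier coefficient of `θ ↦ 1 / |1 + ρ e^{iθ}|`, obtained
by multiplying the series of `(1 + ρ e^{iθ}) ^ (-1/2)` by its conjugate. -/
noncomputable def ac (ρ : ℝ) (n : ℕ) : ℝ := ∑' j : ℕ, bc j * bc (j + n) * ρ ^ (2 * j + n)

lemma ac_summable {ρ : ℝ} (h0 : 0 < ρ) (h1 : ρ < 1) (n : ℕ) :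
    Summable fun j : ℕ => bc j * bc (j + n) * ρ ^ (2 * j + n) := by
  refine Summable.of_nonneg_of_le (fun j => ?_) (fun j => ?_)
      (summable_geometric_of_lt_one h0.le h1)
  · have := bc_pos j; have := bc_pos (j + n); positivity
  · have := bc_pos j
    have := bc_pos (j + n)
    calc bc j * bc (j + n) * ρ ^ (2 * j + n) ≤ 1 * 1 * ρ ^ j := by
          have hp : ρ ^ (2 * j + n) ≤ ρ ^ j := pow_le_pow_of_le_one h0.le h1.le (by omega)
          have := bc_le_one j
          have := bc_le_one (j + n)
          refine mul_le_mul ?_ hp (by positivity) (by norm_num)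
          gcongr
      _ = ρ ^ j := by ring

lemma ac_pos {ρ : ℝ} (h0 : 0 < ρ) (h1 : ρ < 1) (n : ℕ) : 0 < ac ρ n := by
  refine (ac_summable h0 h1 n).tsum_pos (fun j => ?_) 0 ?_
  · have := bc_pos j; have := bc_pos (j + n); positivity
  · have := bc_pos 0; have := bc_pos (0 + n); positivity

lemma ac_upper {ρ : ℝ} (h0 : 0 < ρ) (h1 : ρ < 1) (n k : ℕ) : ac ρ (n + k) ≤ ρ ^ k * ac ρ n := by
  rw [ac, ac, ← tsum_mul_left]
  refine (ac_summable h0 h1 (n + k)).tsum_le_tsum (fun j => ?_) ((ac_summable h0 h1 n).mul_left _)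
  have := bc_pos j
  have := bc_pos (j + n)
  calc bc j * bc (j + (n + k)) * ρ ^ (2 * j + (n + k))
      ≤ bc j * bc (j + n) * ρ ^ (2 * j + (n + k)) := by
        gcongr
        exact bc_anti (by omega)
    _ = _ := by ring

/-- Together with `ac_upper`: `ac ρ (n + k) = ρ ^ k * ac ρ n * (1 + O(k / n))`. -/
lemma ac_lower {ρ : ℝ} (h0 : 0 < ρ) (h1 : ρ < 1) (n k : ℕ) :
    ρ ^ k * ac ρ n * (1 - k / (2 * n + 2)) ≤ ac ρ (n + k) := by
  rw [mul_right_comm, ac, ac, ← tsum_mul_left]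
  refine ((ac_summable h0 h1 n).mul_left _).tsum_le_tsum (fun j => ?_) (ac_summable h0 h1 (n + k))
  have := bc_pos j
  have := bc_pos (j + n)
  calc ρ ^ k * (1 - k / (2 * n + 2)) * (bc j * bc (j + n) * ρ ^ (2 * j + n))
      = bc j * (bc (j + n) * (1 - k / (2 * n + 2))) * ρ ^ (2 * j + (n + k)) := by ring
    _ ≤ bc j * (bc (j + n) * (1 - k / (2 * (j + n : ℕ) + 2))) * ρ ^ (2 * j + (n + k)) := by
        gcongr
        simp
    _ ≤ _ := by
        gcongr
        rw [← add_assoc]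
        exact bc_lower (j + n) k

/-- `ac ρ n ~ bc n * ρ ^ n / √(1 - ρ ^ 2)`. -/
lemma ac_asymp {ρ : ℝ} (h0 : 0 < ρ) (h1 : ρ < 1) :
    Tendsto (fun n => ac ρ n / (bc n * ρ ^ n)) atTop (nhds (1 / √(1 - ρ ^ 2))) := by
  have h2 : ρ ^ 2 < 1 := by nlinarith
  set K : ℝ := ∑' j, bc j * (ρ ^ 2) ^ j with hK
  have hs : Summable (fun j => bc j * (ρ ^ 2) ^ j) := by
    refine Summable.of_nonneg_of_le (fun j => ?_) (fun j => ?_)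
      (summable_geometric_of_lt_one (sq_nonneg ρ) h2)
    · have := bc_pos j; positivity
    · exact mul_le_of_le_one_left (by positivity) (bc_le_one j)
  have hsj : Summable (fun j : ℕ => j * (ρ ^ 2) ^ j : ℕ → ℝ) := by
    simpa using summable_pow_mul_geometric_of_norm_lt_one (R := ℝ) 1 (r := ρ ^ 2)
      (by rw [Real.norm_of_nonneg (sq_nonneg ρ)]; exact h2)
  have hKv : K = 1 / √(1 - ρ ^ 2) := by
    have hz : ‖((ρ ^ 2 : ℝ) : ℂ)‖ < 1 := by
      rw [Complex.norm_real, Real.norm_of_nonneg (sq_nonneg ρ)]; exact h2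
    have e := (bc_series_sq hz).2
    have e1 : (∑' j, (bc j : ℂ) * ((ρ ^ 2 : ℝ) : ℂ) ^ j) = (K : ℂ) := by
      rw [hK, Complex.ofReal_tsum]
      push_cast
      rfl
    rw [e1] at e
    have e2 : K ^ 2 = 1 / (1 - ρ ^ 2) := by exact_mod_cast e
    have hK0 : 0 ≤ K := tsum_nonneg fun j => by have := bc_pos j; positivity
    rw [← Real.sqrt_sq hK0, e2, Real.sqrt_div zero_le_one, Real.sqrt_one]
  rw [← hKv]
  set J : ℝ := ∑' j : ℕ, j * (ρ ^ 2) ^ j with hJ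
  have hlow : ∀ n : ℕ, K - J / (2 * n + 2) ≤ ac ρ n / (bc n * ρ ^ n) := by
    intro n
    have := bc_pos n
    rw [le_div_iff₀ (by positivity), hK, hJ, ← tsum_div_const, ← hs.tsum_sub (hsj.div_const _),
      ← tsum_mul_right, ac]
    refine ((hs.sub (hsj.div_const _)).mul_right _).tsum_le_tsum (fun j => ?_) (ac_summable h0 h1 n)
    have := bc_pos j
    have hl := bc_lower n j
    calc (bc j * (ρ ^ 2) ^ j - j * (ρ ^ 2) ^ j / (2 * n + 2)) * (bc n * ρ ^ n)
        ≤ (bc j * (ρ ^ 2) ^ j - (bc j * j) * (ρ ^ 2) ^ j / (2 * n + 2)) * (bc n * ρ ^ n) := by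
          gcongr
          exact mul_le_of_le_one_left (Nat.cast_nonneg j) (bc_le_one j)
      _ = bc j * (bc n * (1 - j / (2 * n + 2))) * ρ ^ (2 * j + n) := by
          rw [pow_add, pow_mul]; ring
      _ ≤ bc j * bc (j + n) * ρ ^ (2 * j + n) := by
          rw [add_comm j n]
          gcongr
  have hup : ∀ n : ℕ, ac ρ n / (bc n * ρ ^ n) ≤ K := by
    intro n
    have := bc_pos n
    rw [div_le_iff₀ (by positivity), hK, ← tsum_mul_right, ac]
    refine (ac_summable h0 h1 n).tsum_le_tsum (fun j => ?_) (hs.mul_right _)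
    have := bc_pos j
    calc bc j * bc (j + n) * ρ ^ (2 * j + n) ≤ bc j * bc n * ρ ^ (2 * j + n) := by
          gcongr
          exact bc_anti (by omega)
      _ = _ := by rw [pow_add, pow_mul]; ring
  refine tendsto_of_tendsto_of_tendsto_of_le_of_le ?_ tendsto_const_nhds hlow hup
  have : Tendsto (fun n : ℕ => J / (2 * (n : ℝ) + 2)) atTop (nhds 0) := by
    refine Tendsto.div_atTop tendsto_const_nhds ?_
    refine tendsto_atTop_add_const_right _ _ ?_
    exact tendsto_natCast_atTop_atTop.const_mul_atTop (by norm_num)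
  simpa using tendsto_const_nhds.sub this

/-- `bc n ~ 1 / √(π n)`, from the Wallis product. -/
lemma bc_asymp : Tendsto (fun n : ℕ => bc n * √(Real.pi * n)) atTop (nhds 1) := by
  have hW := Real.Wallis.tendsto_W_nhds_pi_div_two
  have h : ∀ᶠ n : ℕ in atTop, √(Real.pi * (1 / (2 + 1 / (n : ℝ))) / Real.Wallis.W n)
      = bc n * √(Real.pi * n) := by
    filter_upwards [eventually_gt_atTop 0] with n hn
    have hn' : (0 : ℝ) < n := by exact_mod_cast hn
    have hb := bc_pos n
    have hWp := Real.Wallis.W_pos n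
    rw [Real.sqrt_eq_iff_mul_self_eq_of_pos (by positivity)]
    have e : bc n ^ 2 = 1 / ((2 * n + 1) * Real.Wallis.W n) := by
      have := bc_sq n
      field_simp
      linarith
    rw [mul_mul_mul_comm, Real.mul_self_sqrt (by positivity), ← sq, e]
    field_simp
  refine Tendsto.congr' h ?_
  have h1 : Tendsto (fun n : ℕ => √(Real.pi * (1 / (2 + 1 / (n : ℝ))) / Real.Wallis.W n)) atTop
      (nhds (√(Real.pi * (1 / (2 + 0)) / (Real.pi / 2)))) := by
    refine (Tendsto.div (Tendsto.mul tendsto_const_nhds (Tendsto.div tendsto_const_nhds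
      (tendsto_const_nhds.add tendsto_one_div_atTop_nhds_zero_nat) (by norm_num))) hW
      (by positivity)).sqrt
  convert h1 using 2
  have : Real.pi * (1 / (2 + 0)) / (Real.pi / 2) = 1 := by
    have := Real.pi_ne_zero
    field_simp; norm_num
  rw [this, Real.sqrt_one]

/-! ### Truncation of the Fourier series -/

/-- Reindexing of a double series over `(i, j)` by the frequency `i - j` and by `min i j`. -/
def diffMin : ℤ × ℕ ≃ ℕ × ℕ where
  toFun p := (p.2 + p.1.toNat, p.2 + (-p.1).toNat)
  invFun q := ((q.1 : ℤ) - q.2, min q.1 q.2)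
  left_inv p := by
    ext <;> simp <;> omega
  right_inv q := by
    ext <;> simp <;> omega

lemma exp_norm (θ : ℝ) : ‖Complex.exp (θ * Complex.I)‖ = 1 := Complex.norm_exp_ofReal_mul_I θ

lemma one_add_ne {ρ : ℝ} (h0 : 0 < ρ) (h1 : ρ < 1) (θ : ℝ) :
    1 + ρ * Complex.exp (θ * Complex.I) ≠ 0 := by
  intro h
  have : ‖(ρ : ℂ) * Complex.exp (θ * Complex.I)‖ = 1 := by
    rw [eq_neg_of_add_eq_zero_right h]; simp
  rw [norm_mul, exp_norm, Complex.norm_real, Real.norm_of_nonneg h0.le] at this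
  linarith

lemma exp_pow (θ : ℝ) (n : ℕ) :
    Complex.exp (θ * Complex.I) ^ n = Complex.exp ((n * θ : ℝ) * Complex.I) := by
  rw [← Complex.exp_nat_mul]; push_cast; ring_nf

/-- The term of index `(i, j)` of the product series, with `i - j = k` and `min i j = j`, written as
a term of the series defining `ac ρ |k|` times a cosine. -/
lemma fourier_term (ρ θ : ℝ) (k : ℤ) (j : ℕ) :
    (((bc (j + k.toNat) : ℂ) * (-(ρ * Complex.exp (θ * Complex.I))) ^ (j + k.toNat)) *
      ((bc (j + (-k).toNat) : ℂ) *
        (starRingEnd ℂ (-(ρ * Complex.exp (θ * Complex.I)))) ^ (j + (-k).toNat))).re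
    = ((-1 : ℝ) ^ k.natAbs * Real.cos (k * θ)) *
        (bc j * bc (j + k.natAbs) * ρ ^ (2 * j + k.natAbs)) := by
  have hwk := exp_pow θ
  have hww : Complex.exp (θ * Complex.I) * starRingEnd ℂ (Complex.exp (θ * Complex.I)) = 1 := by
    rw [Complex.mul_conj, Complex.normSq_eq_norm_sq, exp_norm]; simp
  generalize Complex.exp (θ * Complex.I) = w at hwk hww
  have hsgn : ∀ n : ℕ, (-ρ) ^ (2 * j + n) = (-1) ^ n * ρ ^ (2 * j + n) := by
    intro n
    rw [neg_pow, pow_add (-1 : ℝ), pow_mul]; simp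
  have hzz : -((ρ : ℂ) * w) = ((-ρ : ℝ) : ℂ) * w := by push_cast; ring
  rw [hzz, map_mul, Complex.conj_ofReal]
  rcases Int.eq_nat_or_neg k with ⟨n, rfl | rfl⟩
  · simp only [Int.toNat_natCast, Int.toNat_neg_natCast, add_zero, Int.natAbs_natCast]
    have : (bc (j + n) : ℂ) * (((-ρ : ℝ) : ℂ) * w) ^ (j + n) *
        ((bc j : ℂ) * (((-ρ : ℝ) : ℂ) * starRingEnd ℂ w) ^ j)
        = ((bc (j + n) * bc j * (-ρ) ^ (2 * j + n) : ℝ) : ℂ) * w ^ n := by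
      calc _ = (bc (j + n) : ℂ) * bc j * (((-ρ : ℝ) : ℂ)) ^ (2 * j + n) * w ^ n
            * (w * starRingEnd ℂ w) ^ j := by ring
        _ = _ := by rw [hww]; push_cast; ring
    rw [this, Complex.re_ofReal_mul, hwk, Complex.exp_ofReal_mul_I_re, hsgn]
    push_cast
    ring
  · simp only [Int.toNat_natCast, Int.toNat_neg_natCast, add_zero, Int.natAbs_neg,
      Int.natAbs_natCast, neg_neg]
    have : (bc j : ℂ) * (((-ρ : ℝ) : ℂ) * w) ^ j *
        ((bc (j + n) : ℂ) * (((-ρ : ℝ) : ℂ) * starRingEnd ℂ w) ^ (j + n))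
        = ((bc (j + n) * bc j * (-ρ) ^ (2 * j + n) : ℝ) : ℂ) * starRingEnd ℂ (w ^ n) := by
      rw [map_pow]
      calc _ = (bc (j + n) : ℂ) * bc j * (((-ρ : ℝ) : ℂ)) ^ (2 * j + n) * starRingEnd ℂ w ^ n
            * (w * starRingEnd ℂ w) ^ j := by ring
        _ = _ := by rw [hww]; push_cast; ring
    rw [this, Complex.re_ofReal_mul, Complex.conj_re, hwk, Complex.exp_ofReal_mul_I_re, hsgn]
    push_cast
    rw [neg_mul, Real.cos_neg]
    ring

/-- The double series obtained from `|S|² = S * conj S`. -/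
lemma prod_re {z S : ℂ} {r : ℝ} (hs : Summable (fun j => ‖(bc j : ℂ) * z ^ j‖))
    (hHS : HasSum (fun j => (bc j : ℂ) * z ^ j) S)
    (hHc : HasSum (fun j => (bc j : ℂ) * (starRingEnd ℂ z) ^ j) (starRingEnd ℂ S))
    (hnS : S * (starRingEnd ℂ) S = (r : ℂ)) :
    HasSum (fun x : ℕ × ℕ => (((bc x.1 : ℂ) * z ^ x.1) *
      ((bc x.2 : ℂ) * (starRingEnd ℂ z) ^ x.2)).re) r := by
  have hsc : Summable fun j => ‖(bc j : ℂ) * (starRingEnd ℂ z) ^ j‖ := by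
    refine hs.congr fun j => ?_
    rw [norm_mul, norm_mul, norm_pow, norm_pow, Complex.norm_conj]
  have hsm := summable_mul_of_summable_norm hs hsc
  have hprod := HasSum.mul hHS hHc hsm
  rw [hnS] at hprod
  have hre := Complex.hasSum_re hprod
  rw [Complex.ofReal_re r] at hre
  exact hre

lemma sq_prod {z : ℂ} (hz : ‖z‖ < 1) :
    HasSum (fun x : ℕ × ℕ => (((bc x.1 : ℂ) * z ^ x.1) *
      ((bc x.2 : ℂ) * (starRingEnd ℂ z) ^ x.2)).re) (1 / ‖1 - z‖) := by
  obtain ⟨hs, hsq⟩ := bc_series_sq hz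
  have hHS := hs.of_norm.hasSum
  generalize (∑' j, (bc j : ℂ) * z ^ j) = S at hsq hHS
  have hnS : S * (starRingEnd ℂ) S = ((1 / ‖1 - z‖ : ℝ) : ℂ) := by
    rw [Complex.mul_conj, Complex.normSq_eq_norm_sq, ← norm_pow, hsq, norm_div, norm_one]
  have hHc : HasSum (fun j => (bc j : ℂ) * (starRingEnd ℂ z) ^ j) (starRingEnd ℂ S) := by
    have h := hHS.map (starRingEnd ℂ) Complex.continuous_conj
    refine h.congr_fun fun j => ?_
    simp only [Function.comp, map_mul, map_pow, Complex.conj_ofReal]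
  exact prod_re hs hHS hHc hnS

lemma fourier_prod {ρ : ℝ} (h0 : 0 < ρ) (h1 : ρ < 1) (θ : ℝ) :
    HasSum (fun x : ℕ × ℕ =>
      (((bc x.1 : ℂ) * (-(ρ * Complex.exp (θ * Complex.I))) ^ x.1) *
      ((bc x.2 : ℂ) * (starRingEnd ℂ (-(ρ * Complex.exp (θ * Complex.I)))) ^ x.2)).re)
      (1 / ‖1 + ρ * Complex.exp (θ * Complex.I)‖) := by
  have hz : ‖-(ρ * Complex.exp (θ * Complex.I))‖ < 1 := by
    rw [norm_neg, norm_mul, exp_norm, Complex.norm_real, Real.norm_of_nonneg h0.le]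
    linarith
  have h := sq_prod hz
  rw [sub_neg_eq_add] at h
  exact h

/-- The Fourier cosine series of `1 / |1 + ρ e^{iθ}|`. The constant term, which should be `ac ρ 0`,
is counted twice on both sides so that all indices have the same shape. -/
lemma fourier_weight {ρ : ℝ} (h0 : 0 < ρ) (h1 : ρ < 1) (θ : ℝ) :
    HasSum (fun n : ℕ => 2 * ((-1) ^ n * ac ρ n) * Real.cos (n * θ))
      (1 / ‖1 + ρ * Complex.exp (θ * Complex.I)‖ + ac ρ 0) := by
  have hre2 := (diffMin.hasSum_iff).mpr (fourier_prod h0 h1 θ)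
  have hZ : HasSum (fun k : ℤ => ((-1) ^ k.natAbs * ac ρ k.natAbs) * Real.cos (k * θ))
      (1 / ‖1 + ρ * Complex.exp (θ * Complex.I)‖) := by
    refine hre2.prod_fiberwise fun k => ?_
    have hc : (-1 : ℝ) ^ k.natAbs * ac ρ k.natAbs * Real.cos (k * θ)
        = ((-1 : ℝ) ^ k.natAbs * Real.cos (k * θ)) * ac ρ k.natAbs := by ring
    rw [hc]
    refine ((ac_summable h0 h1 k.natAbs).hasSum.mul_left _).congr_fun fun j => ?_
    exact fourier_term ρ θ k j
  have hN := hZ.nat_add_neg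
  simp only [Int.natAbs_neg, Int.natAbs_natCast, Int.cast_neg, Int.cast_natCast, neg_mul,
    Real.cos_neg, Int.natAbs_zero, pow_zero, Int.cast_zero, zero_mul, Real.cos_zero, one_mul,
    mul_one] at hN
  refine hN.congr_fun fun n => ?_
  ring

/-- The Fourier series of `1 / |1 + ρ e^{iθ}|` truncated after frequency `m`. -/
noncomputable def qTrunc (ρ : ℝ) (m : ℕ) (θ : ℝ) : ℝ :=
  ∑ n ∈ Finset.range (m + 1), 2 * ((-1) ^ n * ac ρ n) * Real.cos (n * θ) - ac ρ 0

/-- Comparison of the tail term of frequency `m + 1 + n` with the `n`-th term of a geometric series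
(here `A = ac ρ (m + 1)`, `A' = ac ρ (m + 1 + n)` and `w = e^{iθ}`). -/
lemma tail_term {ρ A A' θ : ℝ} {w : ℂ} (m n : ℕ) (h0 : 0 < ρ) (hA : 0 < A)
    (hu : A' ≤ ρ ^ n * A) (hl : ρ ^ n * A * (1 - n / (2 * (m + 1 : ℕ) + 2)) ≤ A')
    (hwk : ∀ n : ℕ, w ^ n = Complex.exp ((n * θ : ℝ) * Complex.I)) :
    ‖2 * ((-1) ^ (m + 1 + n) * A') *
        Real.cos ((m + 1 + n : ℕ) * θ) - 2 * A * (-1) ^ (m + 1) *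
        (w ^ (m + 1) * (-(ρ * w)) ^ n).re‖
        ≤ A / (m + 1) * (n * ρ ^ n) := by
  have e : 2 * ((-1) ^ (m + 1 + n) * A') * Real.cos ((m + 1 + n : ℕ) * θ)
      - 2 * A * (-1) ^ (m + 1) * (w ^ (m + 1) * (-(ρ * w)) ^ n).re
      = 2 * (-1) ^ (m + 1) * (-1) ^ n * Real.cos ((m + 1 + n : ℕ) * θ) * (A' - ρ ^ n * A) := by
    have : w ^ (m + 1) * (-(ρ * w)) ^ n = (((-1) ^ n * ρ ^ n : ℝ) : ℂ) * w ^ (m + 1 + n) := by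
      push_cast
      rw [neg_pow, mul_pow, pow_add]; ring
    rw [this, Complex.re_ofReal_mul, hwk, Complex.exp_ofReal_mul_I_re]
    ring
  rw [e, norm_mul, norm_mul, norm_mul, norm_mul]
  simp only [norm_pow, norm_neg, norm_one, one_pow, mul_one, Real.norm_ofNat]
  have hc : ‖Real.cos ((m + 1 + n : ℕ) * θ)‖ ≤ 1 := Real.abs_cos_le_one _
  have hab : ‖A' - ρ ^ n * A‖ ≤ A / (m + 1) * (n * ρ ^ n) / 2 := by
    rw [Real.norm_eq_abs, abs_le]
    have e3 : ρ ^ n * A * (1 - n / (2 * (m + 1 : ℕ) + 2))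
        = ρ ^ n * A - A * (n * ρ ^ n) / (2 * (m + 1 : ℕ) + 2) := by ring
    have e4 : A * (n * ρ ^ n) / (2 * (m + 1 : ℕ) + 2) ≤ A / (m + 1) * (n * ρ ^ n) / 2 := by
      rw [div_mul_eq_mul_div, div_div]
      gcongr
      push_cast; linarith
    have : 0 ≤ A / (m + 1) * (n * ρ ^ n) / 2 := by positivity
    constructor <;> linarith
  calc 2 * ‖Real.cos ((m + 1 + n : ℕ) * θ)‖ * ‖A' - ρ ^ n * A‖
      ≤ 2 * 1 * (A / (m + 1) * (n * ρ ^ n) / 2) := by gcongr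
    _ = _ := by ring

lemma geo_re {w z : ℂ} (c : ℝ) (N : ℕ) (hn : ‖z‖ < 1) :
    HasSum (fun n : ℕ => c * (w ^ N * z ^ n).re) (c * (w ^ N * (1 - z)⁻¹).re) := by
  have h := hasSum_geometric_of_norm_lt_one hn
  have h2 := HasSum.mul_left (w ^ N) h
  have h3 := Complex.hasSum_re h2
  exact HasSum.mul_left c h3

lemma geo_maj {ρ : ℝ} (c : ℝ) (h0 : 0 < ρ) (h1 : ρ < 1) :
    HasSum (fun n : ℕ => c * (n * ρ ^ n)) (c * (ρ / (1 - ρ) ^ 2)) := by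
  have h := hasSum_coe_mul_geometric_of_norm_lt_one (r := ρ) (by rwa [Real.norm_of_nonneg h0.le])
  exact HasSum.mul_left c h

/-- The tail of the Fourier series is, up to a relative error `O(1 / m)`, the real part of a
geometric series with leading term `w ^ (m + 1)`. -/
lemma tail_bound {ρ : ℝ} (h0 : 0 < ρ) (h1 : ρ < 1) (m : ℕ) (θ : ℝ) :
    |1 / ‖1 + ρ * Complex.exp (θ * Complex.I)‖ - qTrunc ρ m θ
      - 2 * ac ρ (m + 1) * (-1) ^ (m + 1) * (Complex.exp (θ * Complex.I) ^ (m + 1) *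
        (1 - -(ρ * Complex.exp (θ * Complex.I)))⁻¹).re|
      ≤ ac ρ (m + 1) / (m + 1) * (ρ / (1 - ρ) ^ 2) := by
  have hA := ac_pos h0 h1 (m + 1)
  have hF := fourier_weight h0 h1 θ
  have hwk := exp_pow θ
  have hnn := exp_norm θ
  generalize 1 / ‖1 + ρ * Complex.exp (θ * Complex.I)‖ = d at hF ⊢
  generalize Complex.exp (θ * Complex.I) = w at hwk hnn ⊢
  have htail := (hasSum_nat_add_iff' (m + 1)).mpr hF
  have hn : ‖-(ρ * w)‖ < 1 := by
    rw [norm_neg, norm_mul, hnn, Complex.norm_real, Real.norm_of_nonneg h0.le]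
    linarith
  have hgre := geo_re (w := w) (2 * ac ρ (m + 1) * (-1) ^ (m + 1)) (m + 1) hn
  have hdiff := htail.sub hgre
  have hmaj := geo_maj (ac ρ (m + 1) / (m + 1)) h0 h1
  have hb := hdiff.norm_le_of_bounded hmaj fun n => by
    rw [add_comm n (m + 1)]
    exact tail_term m n h0 hA (ac_upper h0 h1 (m + 1) n) (ac_lower h0 h1 (m + 1) n) hwk
  rw [Real.norm_eq_abs] at hb
  refine le_trans (le_of_eq ?_) hb
  rw [qTrunc]
  congr 1
  ring

/-- Multiplying by the weight turns the sum of the geometric series into a pure cosine, since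
`|D| / D = exp (-i arg D)`. -/
lemma main_cos {ρ : ℝ} (h0 : 0 < ρ) (h1 : ρ < 1) (m : ℕ) (θ : ℝ) :
    ‖1 + ρ * Complex.exp (θ * Complex.I)‖ * (Complex.exp (θ * Complex.I) ^ (m + 1) *
        (1 - -(ρ * Complex.exp (θ * Complex.I)))⁻¹).re
      = Real.cos ((m + 1) * θ - Complex.arg (1 + ρ * Complex.exp (θ * Complex.I))) := by
  rw [sub_neg_eq_add]
  have hD0 := one_add_ne h0 h1 θ
  have hwk := exp_pow θ (m + 1)
  generalize 1 + ρ * Complex.exp (θ * Complex.I) = D at hD0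
  have hDn : 0 < ‖D‖ := norm_pos_iff.mpr hD0
  have e : (‖D‖ : ℂ) * (Complex.exp (θ * Complex.I) ^ (m + 1) * D⁻¹)
      = Complex.exp (((m + 1) * θ - Complex.arg D : ℝ) * Complex.I) := by
    have h := Complex.norm_mul_exp_arg_mul_I D
    have h' : D⁻¹ = (‖D‖ : ℂ)⁻¹ * (Complex.exp (Complex.arg D * Complex.I))⁻¹ := by
      rw [← mul_inv, h]
    rw [h', hwk]
    have : (‖D‖ : ℂ) ≠ 0 := by exact_mod_cast hDn.ne'
    push_cast
    rw [sub_mul, Complex.exp_sub]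
    field_simp
  rw [← Complex.re_ofReal_mul, e, Complex.exp_ofReal_mul_I_re]

/-- The weighted truncation error is almost equioscillating: its amplitude is `2 * ac ρ (m + 1)`, up
to a relative error `O(1 / m)`, and its phase is `(m + 1) θ - arg (1 + ρ e^{iθ})`. -/
lemma tail_est {ρ : ℝ} (h0 : 0 < ρ) (h1 : ρ < 1) (m : ℕ) (θ : ℝ) :
    ∃ δ : ℝ, |δ| ≤ (2 / (1 - ρ) ^ 2) / (m + 1) ∧
      1 - ‖1 + ρ * Complex.exp (θ * Complex.I)‖ * qTrunc ρ m θ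
        = 2 * ac ρ (m + 1) * ((-1) ^ (m + 1) *
          (Real.cos ((m + 1) * θ - Complex.arg (1 + ρ * Complex.exp (θ * Complex.I))) + δ)) := by
  have hA := ac_pos h0 h1 (m + 1)
  have hbound := tail_bound h0 h1 m θ
  rw [← main_cos h0 h1 m θ]
  have hDn : 0 < ‖1 + ρ * Complex.exp (θ * Complex.I)‖ := norm_pos_iff.mpr (one_add_ne h0 h1 θ)
  have hD2 : ‖1 + ρ * Complex.exp (θ * Complex.I)‖ ≤ 2 := by
    calc _ ≤ ‖(1 : ℂ)‖ + ‖(ρ : ℂ) * Complex.exp (θ * Complex.I)‖ := norm_add_le _ _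
      _ ≤ 2 := by
        rw [norm_mul, exp_norm, Complex.norm_real, Real.norm_of_nonneg h0.le, norm_one]
        linarith
  generalize (Complex.exp (θ * Complex.I) ^ (m + 1) *
        (1 - -(ρ * Complex.exp (θ * Complex.I)))⁻¹).re = R at *
  generalize ‖1 + ρ * Complex.exp (θ * Complex.I)‖ = d at *
  generalize qTrunc ρ m θ = q at *
  generalize ac ρ (m + 1) = A at *
  set T := 1 / d - q - 2 * A * (-1) ^ (m + 1) * R with hT
  refine ⟨(-1) ^ (m + 1) * d * T / (2 * A), ?_, ?_⟩
  · rw [abs_div, abs_mul, abs_mul, abs_pow, abs_neg, abs_one, one_pow, one_mul, abs_of_pos hDn,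
      abs_of_pos (by positivity : 0 < 2 * A), div_le_iff₀ (by positivity)]
    have : 0 < 1 - ρ := by linarith
    calc d * |T| ≤ 2 * (A / (m + 1) * (1 / (1 - ρ) ^ 2)) := by
          gcongr
          refine hbound.trans ?_
          gcongr
      _ ≤ 2 / (1 - ρ) ^ 2 / (m + 1) * (2 * A) := by
          have : 0 ≤ A / (m + 1) * (1 / (1 - ρ) ^ 2) := by positivity
          have e : 2 / (1 - ρ) ^ 2 / (m + 1) * (2 * A) = 4 * (A / (m + 1) * (1 / (1 - ρ) ^ 2)) := by
            field_simp; ring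
          rw [e]; linarith
  · have hpp : ((-1 : ℝ) ^ (m + 1)) * (-1) ^ (m + 1) = 1 := by
      rw [← mul_pow]; simp
    have e : 2 * A * ((-1) ^ (m + 1) * (d * R + (-1) ^ (m + 1) * d * T / (2 * A)))
        = d * (2 * A * (-1) ^ (m + 1) * R + ((-1 : ℝ) ^ (m + 1)) * (-1) ^ (m + 1) * T) := by
      field_simp
    rw [e, hpp, hT]
    field_simp
    ring

/-! ### Alternation and the trial polynomial -/

/-- A continuous real function attaining `0` and `n` passes through `0, 1, …, n` in order. -/
lemma ivt_points (f : ℝ → ℝ) (α : ℝ) (n : ℕ) : ∀ β : ℝ, α ≤ β → ContinuousOn f (Icc α β) →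
    f α = 0 → f β = n →
    ∃ t : ℕ → ℝ, (∀ k ≤ n, t k ∈ Icc α β ∧ f (t k) = k) ∧ ∀ k < n, t k < t (k + 1) := by
  induction n with
  | zero =>
    intro β hab _ h0 h1
    exact ⟨fun _ => α, fun k hk => ⟨⟨le_rfl, hab⟩, by simp_all⟩, by simp⟩
  | succ n ih =>
    intro β hab hc h0 h1
    obtain ⟨γ, hγ, hfγ⟩ : (n : ℝ) ∈ f '' Icc α β := by
      apply intermediate_value_Icc hab hc
      rw [h0, h1]; push_cast; constructor
      · positivity
      · linarith
    obtain ⟨t, ht, hlt⟩ := ih γ hγ.1 (hc.mono (Icc_subset_Icc_right hγ.2)) h0 hfγ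
    have hγβ : γ < β := by
      rcases hγ.2.lt_or_eq with h | h
      · exact h
      · exfalso; rw [h, h1] at hfγ; push_cast at hfγ; linarith
    refine ⟨fun k => if k ≤ n then t k else β, fun k hk => ?_, fun k hk => ?_⟩
    · by_cases hkn : k ≤ n
      · simp only [hkn, if_true]
        obtain ⟨h, h'⟩ := ht k hkn
        exact ⟨⟨h.1, h.2.trans hγ.2⟩, h'⟩
      · have : k = n + 1 := by omega
        subst this
        simp only [hkn, if_false]
        exact ⟨⟨hab, le_rfl⟩, h1⟩
    · by_cases hkn : k + 1 ≤ n
      · have : k ≤ n := by omega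
        simp only [hkn, this, if_true]
        exact hlt k (by omega)
      · have : k = n := by omega
        subst this
        simp only [le_refl, if_true, hkn, if_false]
        exact ((ht k le_rfl).1.2).trans_lt hγβ

/-- An odd polynomial of degree at most `2n`, real on an interval of positive reals,
cannot alternate in sign at `n + 1` points of this interval. -/
lemma no_alt {D : Polynomial ℂ} {n : ℕ} (hdeg : D.natDegree ≤ 2 * n)
    (hodd : ∀ z, D.eval (-z) = -D.eval z) {a b : ℝ} (ha : 0 < a)
    (hreal : ∀ x ∈ Icc a b, (D.eval (x : ℂ)).im = 0) (x : ℕ → ℝ)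
    (hx : ∀ k ≤ n, x k ∈ Icc a b) (hlt : ∀ k < n, x k < x (k + 1)) (s : ℝ)
    (hs : ∀ k ≤ n, 0 < s * (-1) ^ k * (D.eval (x k : ℂ)).re) : False := by
  have hz : ∀ k : Fin n, ∃ z : ℝ, x k < z ∧ z < x (k + 1) ∧ D.eval (z : ℂ) = 0 := by
    intro ⟨k, hk⟩
    have h1 := hs k hk.le
    have h2 := hs (k + 1) hk
    have hsub : Icc (x k) (x (k + 1)) ⊆ Icc a b :=
      Icc_subset_Icc (hx k hk.le).1 (hx (k + 1) hk).2
    have hc : ContinuousOn (fun u : ℝ => s * (-1) ^ k * (D.eval (u : ℂ)).re)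
        (Icc (x k) (x (k + 1))) := by
      apply Continuous.continuousOn
      have : Continuous fun u : ℝ => D.eval (u : ℂ) :=
        D.continuous.comp Complex.continuous_ofReal
      fun_prop
    have := intermediate_value_Ioo' (hlt k hk).le hc
    obtain ⟨z, hz, hz0⟩ := this ⟨by rw [pow_succ] at h2; linarith, h1⟩
    refine ⟨z, hz.1, hz.2, Complex.ext ?_ (hreal z (hsub ⟨hz.1.le, hz.2.le⟩))⟩
    have hne : s * (-1) ^ k ≠ 0 := left_ne_zero_of_mul h1.ne'
    simpa [hne] using hz0
  choose z hz1 hz2 hz3 using hz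
  have hxm : ∀ i j, i ≤ j → j ≤ n → x i ≤ x j := by
    intro i j hij
    induction j, hij using Nat.le_induction with
    | base => intro _; exact le_rfl
    | succ j hj ih => intro h; exact (ih (by omega)).trans (hlt j (by omega)).le
  have hzm : StrictMono z := by
    intro i j hij
    exact (hz2 i).trans_le ((hxm _ _ (by omega) j.2.le).trans (hz1 j).le)
  have hzpos : ∀ k, 0 < z k := fun k => ha.trans_le ((hx k k.2.le).1.trans (hz1 k).le)
  have hD0 : D ≠ 0 := by
    rintro rfl
    simpa using hs 0 (Nat.zero_le _)
  have h00 : D.eval 0 = 0 := by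
    have := hodd 0
    rw [neg_zero] at this
    exact self_eq_neg.mp this
  let f : Option (Fin n ⊕ Fin n) → ℂ := fun o => match o with
    | none => 0
    | some (Sum.inl k) => (z k : ℂ)
    | some (Sum.inr k) => -(z k : ℂ)
  have hf : Function.Injective f := by
    intro p q h
    rcases p with _ | p | p <;> rcases q with _ | q | q <;> simp only [f] at h
    · rfl
    · exact absurd (by exact_mod_cast h.symm) (hzpos q).ne'
    · exact absurd (by exact_mod_cast (neg_eq_zero.mp h.symm)) (hzpos q).ne'
    · exact absurd (by exact_mod_cast h) (hzpos p).ne'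
    · have : z p = z q := by exact_mod_cast h
      rw [hzm.injective this]
    · have : z p = -z q := by exact_mod_cast h
      linarith [hzpos p, hzpos q]
    · exact absurd (by exact_mod_cast (neg_eq_zero.mp h)) (hzpos p).ne'
    · have : -z p = z q := by exact_mod_cast h
      linarith [hzpos p, hzpos q]
    · have : z p = z q := by exact_mod_cast (neg_inj.mp h)
      rw [hzm.injective this]
  have hroot : ∀ o, D.eval (f o) = 0 := by
    rintro (_ | k | k)
    · exact h00
    · exact hz3 k
    · simp only [f]; rw [hodd, hz3, neg_zero]
  have hcard : (Finset.univ.image f).card = 2 * n + 1 := by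
    rw [Finset.card_image_of_injective _ hf]
    simp; ring
  have := Polynomial.card_le_degree_of_subset_roots (p := D) (Z := Finset.univ.image f) (by
    intro w hw
    rw [Finset.mem_val, Finset.mem_image] at hw
    obtain ⟨o, -, rfl⟩ := hw
    rw [Polynomial.mem_roots hD0]
    exact hroot o)
  omega

/-- The parametrization `θ ↦ ½(1+a)|1 + ρ e^{iθ}|` of `[a, 1]`, `ρ = (1-a)/(1+a)`. -/
noncomputable def xi (a θ : ℝ) : ℝ :=
  (1 + a) / 2 * ‖1 + ((1 - a) / (1 + a) : ℝ) * Complex.exp (θ * Complex.I)‖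

lemma normsq_one_add (ρ θ : ℝ) :
    ‖1 + (ρ : ℂ) * Complex.exp (θ * Complex.I)‖ ^ 2 = 1 + 2 * ρ * Real.cos θ + ρ ^ 2 := by
  rw [← Complex.normSq_eq_norm_sq, Complex.normSq_apply]
  have h1 : (1 + (ρ : ℂ) * Complex.exp (θ * Complex.I)).re = 1 + ρ * Real.cos θ := by
    rw [Complex.add_re, Complex.re_ofReal_mul, Complex.exp_ofReal_mul_I_re, Complex.one_re]
  have h2 : (1 + (ρ : ℂ) * Complex.exp (θ * Complex.I)).im = ρ * Real.sin θ := by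
    rw [Complex.add_im, Complex.im_ofReal_mul, Complex.exp_ofReal_mul_I_im, Complex.one_im,
      zero_add]
  rw [h1, h2]
  nlinarith [Real.sin_sq_add_cos_sq θ]

/-- `xi ²` is affine in `cos θ`, so even polynomials in `xi` are exactly the cosine polynomials. -/
lemma xi_sq {a : ℝ} (h0 : 0 < a) (θ : ℝ) :
    xi a θ ^ 2 = (1 + a ^ 2) / 2 + (1 - a ^ 2) / 2 * Real.cos θ := by
  rw [xi, mul_pow, normsq_one_add]
  field_simp
  ring

lemma xi_nonneg {a : ℝ} (h0 : 0 < a) (θ : ℝ) : 0 ≤ xi a θ := by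
  rw [xi]; positivity

lemma xi_mem {a : ℝ} (h0 : 0 < a) (h1 : a < 1) (θ : ℝ) : xi a θ ∈ Icc a 1 := by
  have h := xi_sq h0 θ
  have := xi_nonneg h0 θ
  have := Real.cos_le_one θ
  have := Real.neg_one_le_cos θ
  have : 0 < 1 - a ^ 2 := by nlinarith
  constructor
  · apply le_of_sq_le_sq _ (xi_nonneg h0 θ); rw [h]; nlinarith
  · apply le_of_sq_le_sq _ zero_le_one; rw [h]; nlinarith

lemma xi_anti {a : ℝ} (h0 : 0 < a) (h1 : a < 1) {s t : ℝ} (hs : s ∈ Icc 0 Real.pi)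
    (ht : t ∈ Icc 0 Real.pi) (hst : s < t) : xi a t < xi a s := by
  have := Real.strictAntiOn_cos hs ht hst
  apply lt_of_pow_lt_pow_left₀ 2 (xi_nonneg h0 s)
  rw [xi_sq h0, xi_sq h0]
  have : 0 < 1 - a ^ 2 := by nlinarith
  nlinarith

lemma xi_surj {a : ℝ} (h0 : 0 < a) (h1 : a < 1) {x : ℝ} (hx : x ∈ Icc a 1) :
    ∃ θ, xi a θ = x := by
  have h2 : 0 < 1 - a ^ 2 := by nlinarith
  refine ⟨Real.arccos ((x ^ 2 - (1 + a ^ 2) / 2) / ((1 - a ^ 2) / 2)), ?_⟩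
  have hx2 : a ^ 2 ≤ x ^ 2 := pow_le_pow_left₀ h0.le hx.1 2
  have hx3 : x ^ 2 ≤ 1 := pow_le_one₀ (h0.le.trans hx.1) hx.2
  apply (pow_left_inj₀ (xi_nonneg h0 _) (h0.le.trans hx.1) two_ne_zero).mp
  rw [xi_sq h0, Real.cos_arccos]
  · field_simp; ring
  · rw [le_div_iff₀ (by linarith)]; linarith
  · rw [div_le_iff₀ (by linarith)]; linarith

open Polynomial in
/-- The trial polynomial: with `x = xi a θ`, the function `|1 + ρ e^{iθ}| * qTrunc ρ m θ` is an odd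
polynomial in `x` of degree at most `2m + 1`, built from Chebyshev polynomials in
`cos θ = (2x² - 1 - a²) / (1 - a²)`. -/
lemma trial_poly {a : ℝ} (h0 : 0 < a) (h1 : a < 1) (m : ℕ) :
    ∃ p : ℂ[X], p.natDegree ≤ 2 * m + 1 ∧ (∀ z, p.eval (-z) = -p.eval z) ∧
      ∀ θ : ℝ, p.eval (xi a θ : ℂ) =
        ((‖1 + (((1 - a) / (1 + a) : ℝ) : ℂ) * Complex.exp (θ * Complex.I)‖ *
          qTrunc ((1 - a) / (1 + a)) m θ : ℝ) : ℂ) := by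
  set ρ := (1 - a) / (1 + a) with hρ
  have h2 : 0 < 1 - a ^ 2 := by nlinarith
  let r : ℂ[X] := C ((2 / (1 - a ^ 2) : ℝ) : ℂ) * X ^ 2
    + C ((-(1 + a ^ 2) / (1 - a ^ 2) : ℝ) : ℂ)
  let S : ℂ[X] := ∑ n ∈ Finset.range (m + 1),
    C ((2 * ((-1) ^ n * ac ρ n) : ℝ) : ℂ) * (Chebyshev.T ℂ n).comp r - C ((ac ρ 0 : ℝ) : ℂ)
  have hrdeg : r.natDegree ≤ 2 := by
    simp only [r]; compute_degree
  have hSdeg : S.natDegree ≤ 2 * m := by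
    simp only [S]
    refine (natDegree_sub_le _ _).trans (max_le ?_ (by simp))
    refine natDegree_sum_le_of_forall_le _ _ fun n hn => ?_
    refine (natDegree_C_mul_le _ _).trans ?_
    rw [natDegree_comp]
    have : (Chebyshev.T ℂ (n : ℤ)).natDegree ≤ n := by
      rw [Chebyshev.natDegree_T]; simp
    have hn' := Finset.mem_range.mp hn
    calc _ ≤ n * 2 := Nat.mul_le_mul this hrdeg
      _ ≤ _ := by omega
  refine ⟨C ((2 / (1 + a) : ℝ) : ℂ) * X * S, ?_, ?_, ?_⟩
  · refine natDegree_mul_le.trans ?_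
    have : (C ((2 / (1 + a) : ℝ) : ℂ) * X).natDegree ≤ 1 := by compute_degree
    omega
  · intro z
    have hr : r.eval (-z) = r.eval z := by simp [r]
    have hS : S.eval (-z) = S.eval z := by
      simp only [S, eval_sub, eval_finsetSum, eval_mul, eval_comp, hr, eval_C]
    rw [eval_mul, eval_mul, eval_mul, eval_mul, hS, eval_X, eval_X, eval_C, eval_C]; ring
  · intro θ
    have hr : r.eval (xi a θ : ℂ) = Complex.cos θ := by
      simp only [r, eval_add, eval_mul, eval_C, eval_pow, eval_X]
      rw [← Complex.ofReal_pow, xi_sq h0, ← Complex.ofReal_cos]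
      norm_cast
      field_simp; ring
    have hS : S.eval (xi a θ : ℂ) = (qTrunc ρ m θ : ℂ) := by
      simp only [S, eval_sub, eval_finsetSum, eval_mul, eval_comp, hr, eval_C,
        Chebyshev.T_complex_cos, qTrunc]
      push_cast
      rfl
    rw [eval_mul, eval_mul, hS, eval_C, eval_X, xi]
    rw [← hρ]
    generalize Complex.exp (θ * Complex.I) = w
    norm_cast
    field_simp

/-- Equioscillation comparison: an odd polynomial of degree at most `2m + 2` of the form
`1 - L cos Φ` on `[a, 1]`, with `Φ` running from `0` to `(m+1)π`, has amplitude `L` close to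
that of the trial polynomial. Whichever of the two polynomials has the strictly larger amplitude
at its `m + 2` extremal points makes the difference alternate in sign there, against `no_alt`. -/
lemma comparison {a : ℝ} (h0 : 0 < a) (h1 : a < 1) (m : ℕ) (P : Polynomial ℂ)
    (hdeg : P.natDegree ≤ 2 * (m + 1)) (hodd : ∀ z, P.eval (-z) = -P.eval z) {L : ℝ}
    (hL : 0 < L) (Φ : ℝ → ℝ) (hΦ : ContinuousOn Φ (Icc a 1)) (hΦa : Φ a = 0)
    (hΦ1 : Φ 1 = Real.pi * (m + 1))
    (hP : ∀ x ∈ Icc a 1, P.eval (x : ℂ) = ((1 - L * Real.cos (Φ x) : ℝ) : ℂ)) {ρ C : ℝ}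
    (hρ : ρ = (1 - a) / (1 + a)) (hC : C = 2 / (1 - ρ) ^ 2) :
    L ≤ 2 * ac ρ (m + 1) * (1 + C / (m + 1)) ∧ 2 * ac ρ (m + 1) * (1 - C / (m + 1)) ≤ L := by
  have hρ0 : 0 < ρ := by rw [hρ]; apply div_pos <;> linarith
  have hρ1 : ρ < 1 := by rw [hρ, div_lt_one (by linarith)]; linarith
  have hA := ac_pos hρ0 hρ1 (m + 1)
  obtain ⟨p, hpdeg, hpodd, hp⟩ := trial_poly h0 h1 m
  rw [← hρ] at hp
  have hp' : ∀ θ : ℝ, ∃ δ : ℝ, |δ| ≤ C / (m + 1) ∧ p.eval (xi a θ : ℂ) =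
      ((1 - 2 * ac ρ (m + 1) * ((-1) ^ (m + 1) * (Real.cos ((m + 1) * θ -
        Complex.arg (1 + ρ * Complex.exp (θ * Complex.I))) + δ)) : ℝ) : ℂ) := by
    intro θ
    obtain ⟨δ, hδ, he⟩ := tail_est hρ0 hρ1 m θ
    refine ⟨δ, hC ▸ hδ, ?_⟩
    rw [hp θ, ← he]
    congr 1
    ring
  have hpreal : ∀ x ∈ Icc a 1, (p.eval (x : ℂ)).im = 0 := by
    intro x hx
    obtain ⟨θ, rfl⟩ := xi_surj h0 h1 hx
    rw [hp θ]; exact Complex.ofReal_im _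
  have hPreal : ∀ x ∈ Icc a 1, (P.eval (x : ℂ)).im = 0 := by
    intro x hx
    rw [hP x hx]; exact Complex.ofReal_im _
  have hpp : ((-1 : ℝ) ^ (m + 1)) * (-1) ^ (m + 1) = 1 := by
    rw [← mul_pow]; simp
  generalize ac ρ (m + 1) = A at *
  constructor
  · by_contra! hlt
    -- The points where `Φ = kπ`, i.e. where `1 - L cos Φ` is extremal.
    obtain ⟨x, hx, hxlt⟩ := ivt_points (fun x => Φ x / Real.pi) a (m + 1) 1 h1.le
      (hΦ.div_const _) (by simp [hΦa]) (by
        rw [hΦ1]; push_cast; field_simp)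
    refine no_alt (D := P - p) (n := m + 1) ?_ ?_ h0 ?_ x (fun k hk => (hx k hk).1) hxlt (-1) ?_
    · exact (Polynomial.natDegree_sub_le _ _).trans (max_le hdeg (by omega))
    · intro z; rw [Polynomial.eval_sub, Polynomial.eval_sub, hodd, hpodd]; ring
    · intro y hy
      rw [Polynomial.eval_sub, Complex.sub_im, hPreal y hy, hpreal y hy, sub_zero]
    · intro k hk
      obtain ⟨hk1, hk2⟩ := hx k hk
      have hΦk : Φ (x k) = k * Real.pi := by
        rw [div_eq_iff Real.pi_ne_zero] at hk2; exact hk2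
      obtain ⟨θ, hθ⟩ := xi_surj h0 h1 hk1
      obtain ⟨δ, hδ, he⟩ := hp' θ
      rw [Polynomial.eval_sub, hP _ hk1, hΦk, Real.cos_nat_mul_pi, ← hθ, he, Complex.sub_re,
        Complex.ofReal_re, Complex.ofReal_re]
      have hkk : ((-1 : ℝ) ^ k) * (-1) ^ k = 1 := by
        rw [← mul_pow]; simp
      have hcos := Real.abs_cos_le_one ((m + 1) * θ -
        Complex.arg (1 + ρ * Complex.exp (θ * Complex.I)))
      generalize Real.cos ((m + 1) * θ -
        Complex.arg (1 + ρ * Complex.exp (θ * Complex.I))) = c at hcos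
      have e : -1 * (-1 : ℝ) ^ k * (1 - L * (-1) ^ k - (1 - 2 * A * ((-1) ^ (m + 1) * (c + δ))))
          = L * (((-1 : ℝ) ^ k) * (-1) ^ k) - (-1) ^ k * (2 * A * ((-1) ^ (m + 1) * (c + δ))) := by
        ring
      rw [e, hkk, mul_one]
      have h2 : |(-1) ^ k * (2 * A * ((-1) ^ (m + 1) * (c + δ)))| ≤ 2 * A * (1 + C / (m + 1)) := by
        rw [abs_mul, abs_neg_one_pow, one_mul, abs_mul, abs_of_pos (by positivity : 0 < 2 * A),
          abs_mul, abs_neg_one_pow, one_mul]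
        gcongr
        exact (abs_add_le _ _).trans (add_le_add hcos hδ)
      linarith [(abs_le.mp h2).2]
  · by_contra! hlt
    -- The phase of the trial polynomial runs continuously from `0` to `(m+1)π`; its extremal points
    -- are found by the same argument, but `xi` reverses their order.
    have hcontΨ : Continuous fun θ : ℝ => ((m + 1) * θ -
        Complex.arg (1 + ρ * Complex.exp (θ * Complex.I))) / Real.pi := by
      have : Continuous fun θ : ℝ => Complex.arg (1 + ρ * Complex.exp (θ * Complex.I)) := by
        rw [continuous_iff_continuousAt]
        intro θ
        refine ContinuousAt.comp (f := fun θ : ℝ => 1 + ρ * Complex.exp (θ * Complex.I))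
          (Complex.continuousAt_arg ?_) (by fun_prop)
        left
        rw [Complex.add_re, Complex.re_ofReal_mul, Complex.exp_ofReal_mul_I_re, Complex.one_re]
        nlinarith [Real.neg_one_le_cos θ]
      fun_prop
    obtain ⟨t, ht, htlt⟩ := ivt_points _ 0 (m + 1) Real.pi Real.pi_pos.le hcontΨ.continuousOn
      (by
        have : (1 + (ρ : ℂ)) = ((1 + ρ : ℝ) : ℂ) := by push_cast; rfl
        rw [Complex.ofReal_zero, zero_mul, Complex.exp_zero, mul_one, this,
          Complex.arg_ofReal_of_nonneg (by linarith)]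
        simp)
      (by
        have : (1 + (ρ : ℂ) * (-1)) = ((1 - ρ : ℝ) : ℂ) := by push_cast; ring
        rw [Complex.exp_pi_mul_I, this, Complex.arg_ofReal_of_nonneg (by linarith)]
        push_cast
        field_simp
        simp)
    refine no_alt (D := p - P) (n := m + 1) ?_ ?_ h0 ?_ (fun k => xi a (t (m + 1 - k)))
      (fun k hk => xi_mem h0 h1 _) ?_ (-1) ?_
    · exact (Polynomial.natDegree_sub_le _ _).trans (max_le (by omega) hdeg)
    · intro z; rw [Polynomial.eval_sub, Polynomial.eval_sub, hodd, hpodd]; ring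
    · intro y hy
      rw [Polynomial.eval_sub, Complex.sub_im, hPreal y hy, hpreal y hy, sub_zero]
    · intro k hk
      have e : m + 1 - k = (m + 1 - (k + 1)) + 1 := by omega
      rw [e]
      exact xi_anti h0 h1 (ht _ (by omega)).1 (ht _ (by omega)).1 (htlt _ (by omega))
    · intro k hk
      obtain ⟨-, hk2⟩ := ht (m + 1 - k) (by omega)
      rw [div_eq_iff Real.pi_ne_zero] at hk2
      obtain ⟨δ, hδ, he⟩ := hp' (t (m + 1 - k))
      rw [hk2, Real.cos_nat_mul_pi] at he
      have hx := xi_mem h0 h1 (t (m + 1 - k))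
      generalize xi a (t (m + 1 - k)) = y at *
      rw [Polynomial.eval_sub, hP _ hx, he, Complex.sub_re, Complex.ofReal_re, Complex.ofReal_re]
      have hs : (-1 : ℝ) ^ (m + 1 - k) * (-1) ^ k = (-1) ^ (m + 1) := by
        rw [← pow_add]; congr 1; omega
      have hkk : ((-1 : ℝ) ^ k) * (-1) ^ k = 1 := by
        rw [← mul_pow]; simp
      have hcos := Real.abs_cos_le_one (Φ y)
      generalize Real.cos (Φ y) = c at hcos
      have e : -1 * (-1 : ℝ) ^ k * (1 - 2 * A * ((-1) ^ (m + 1) * ((-1) ^ (m + 1 - k) + δ))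
            - (1 - L * c))
          = 2 * A * (((-1) ^ (m + 1)) * ((-1) ^ (m + 1 - k) * (-1) ^ k)
            + (-1) ^ k * (-1) ^ (m + 1) * δ) - (-1) ^ k * (L * c) := by
        ring
      rw [e, hs, hpp]
      have h2 : |(-1) ^ k * (L * c)| ≤ L := by
        rw [abs_mul, abs_mul, abs_pow, abs_neg, abs_one, one_pow, one_mul, abs_of_pos hL]
        nlinarith
      have h3 : |(-1) ^ k * (-1) ^ (m + 1) * δ| ≤ C / (m + 1) := by
        rw [abs_mul, abs_mul, abs_pow, abs_pow, abs_neg, abs_one, one_pow, one_pow, one_mul,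
          one_mul]
        exact hδ
      have h4 : 2 * A * (1 - C / (m + 1)) ≤ 2 * A * (1 + (-1) ^ k * (-1) ^ (m + 1) * δ) := by
        gcongr
        linarith [(abs_le.mp h3).1]
      linarith [(abs_le.mp h2).2]

/-! ### From amplitudes to asymptotics -/

/-- `B = log (2 cosh B) + o(1)` as `B → ∞`, with the error made explicit. -/
lemma log_cosh_eq (B : ℝ) :
    B = Real.log 2 + Real.log (Real.cosh B) - Real.log (1 + Real.exp (-(2 * B))) := by
  have h : 2 * Real.cosh B = Real.exp B * (1 + Real.exp (-(2 * B))) := by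
    rw [mul_add, mul_one, ← Real.exp_add, Real.cosh_eq]
    ring_nf
  have h1 : Real.log (2 * Real.cosh B) = B + Real.log (1 + Real.exp (-(2 * B))) := by
    rw [h, Real.log_mul (Real.exp_pos _).ne' (by positivity), Real.log_exp]
  rw [Real.log_mul two_ne_zero (Real.cosh_pos B).ne'] at h1
  linarith

/-- Squeezing `1 / cosh B_m` between multiples `1 ± C / (m + 1)` of `2 * ac ρ (m + 1)`, and inserting
the asymptotics of `ac` and `bc`, gives the expansion of `B_m`. -/
lemma final_asymp {a ρ C : ℝ} (h0 : 0 < a) (h1 : a < 1) (hρ : ρ = (1 - a) / (1 + a)) (B : ℕ → ℝ)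
    (hB : ∀ m, 0 < B m)
    (hcomp : ∀ m : ℕ, 1 / Real.cosh (B m) ≤ 2 * ac ρ (m + 1) * (1 + C / (m + 1)) ∧
      2 * ac ρ (m + 1) * (1 - C / (m + 1)) ≤ 1 / Real.cosh (B m)) :
    Tendsto (fun m : ℕ =>
        B m - ((m + 1 / 2) * Real.log ((1 + a) / (1 - a)) + (1 / 2) * Real.log m +
          (1 / 2) * Real.log (2 * a / (1 - a ^ 2)) + (1 / 2) * Real.log (2 * Real.pi)))
      atTop (nhds 0) := by
  have hρ0 : 0 < ρ := by rw [hρ]; apply div_pos <;> linarith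
  have hρ1 : ρ < 1 := by rw [hρ, div_lt_one (by linarith)]; linarith
  have hA : ∀ n, 0 < ac ρ n := ac_pos hρ0 hρ1
  have hCN : Tendsto (fun m : ℕ => C / ((m : ℝ) + 1)) atTop (nhds 0) :=
    tendsto_const_div_atTop_nhds_zero_nat C |>.comp (tendsto_add_atTop_nat 1) |>.congr
      fun m => by simp
  -- the ratio of the two amplitudes tends to one
  have hx : Tendsto (fun m : ℕ => 1 / Real.cosh (B m) / (2 * ac ρ (m + 1))) atTop (nhds 1) := by
    refine tendsto_of_tendsto_of_tendsto_of_le_of_le (g := fun m : ℕ => 1 - C / ((m : ℝ) + 1))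
      (h := fun m : ℕ => 1 + C / ((m : ℝ) + 1)) (by simpa using hCN.const_sub 1)
      (by simpa using hCN.const_add 1) (fun m => ?_) (fun m => ?_)
    · rw [le_div_iff₀ (by have := hA (m + 1); positivity)]
      linarith [(hcomp m).2]
    · rw [div_le_iff₀ (by have := hA (m + 1); positivity)]
      linarith [(hcomp m).1]
  have hu := (ac_asymp hρ0 hρ1).comp (tendsto_add_atTop_nat 1)
  have hv := bc_asymp.comp (tendsto_add_atTop_nat 1)
  have hac0 : Tendsto (fun m : ℕ => ac ρ (m + 1)) atTop (nhds 0) := by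
    have hp := (tendsto_pow_atTop_nhds_zero_of_lt_one hρ0.le hρ1).comp (tendsto_add_atTop_nat 1)
    refine squeeze_zero (fun m => (hA _).le) (fun m => ?_) (by simpa using hp.mul_const (ac ρ 0))
    have := ac_upper hρ0 hρ1 0 (m + 1)
    rwa [zero_add] at this
  have hL0 : Tendsto (fun m => 1 / Real.cosh (B m)) atTop (nhds 0) := by
    have := hx.mul (hac0.const_mul 2)
    rw [mul_zero, mul_zero] at this
    refine this.congr fun m => ?_
    have := hA (m + 1)
    field_simp
  have he : Tendsto (fun m => Real.exp (-(2 * B m))) atTop (nhds 0) := by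
    have h2 := hL0.pow 2
    rw [zero_pow two_ne_zero] at h2
    refine squeeze_zero (fun m => (Real.exp_pos _).le) (fun m => ?_) h2
    have : Real.cosh (B m) ≤ Real.exp (B m) := by
      rw [Real.cosh_eq]
      have : Real.exp (-B m) ≤ Real.exp (B m) := Real.exp_le_exp.mpr (by linarith [hB m])
      linarith
    have e : Real.exp (-(2 * B m)) = (1 / Real.exp (B m)) ^ 2 := by
      rw [one_div, ← Real.exp_neg, ← Real.exp_nat_mul]; push_cast; ring_nf
    rw [e]
    have := Real.cosh_pos (B m)
    gcongr
  have hle : Tendsto (fun m => Real.log (1 + Real.exp (-(2 * B m)))) atTop (nhds 0) := by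
    have := (he.const_add 1).log (by norm_num)
    simpa using this
  have h2 : 0 < 1 - ρ ^ 2 := by nlinarith
  have hs : 0 < √(1 - ρ ^ 2) := Real.sqrt_pos.mpr h2
  have hprod := ((hu.mul hv).mul hx).log (by positivity)
  rw [mul_one, mul_one, one_div, Real.log_inv, Real.log_sqrt h2.le] at hprod
  have hlogm : Tendsto (fun m : ℕ => Real.log ((m : ℝ) + 1) - Real.log m) atTop (nhds 0) := by
    have h := (tendsto_one_div_atTop_nhds_zero_nat (𝕜 := ℝ)).const_add 1 |>.log (by norm_num)
    rw [add_zero, Real.log_one] at h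
    refine h.congr' ?_
    filter_upwards [eventually_gt_atTop 0] with m hm
    have : (0 : ℝ) < m := by exact_mod_cast hm
    rw [← Real.log_div (by positivity) this.ne']
    congr 1
    field_simp
  have hconst : Real.log (1 - ρ ^ 2) / 2 - Real.log ρ / 2 - Real.log (2 * a / (1 - a ^ 2)) / 2
      - Real.log 2 / 2 = 0 := by
    have h3 : 0 < 1 - a ^ 2 := by nlinarith
    have e : 1 - ρ ^ 2 = ρ * (2 * a / (1 - a ^ 2)) * 2 := by
      rw [hρ]
      have : 1 - a ≠ 0 := by linarith
      have : (1 : ℝ) - a ^ 2 = (1 - a) * (1 + a) := by ring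
      rw [this]
      field_simp
      ring
    rw [e, Real.log_mul (by positivity) two_ne_zero, Real.log_mul hρ0.ne' (by positivity)]
    ring
  have hfin := ((hlogm.const_mul (1 / 2)).sub hprod).sub hle
  have hfin2 := hfin.sub_const
    (Real.log ρ / 2 + Real.log (2 * a / (1 - a ^ 2)) / 2 + Real.log 2 / 2)
  have e0 : 1 / 2 * 0 - -(Real.log (1 - ρ ^ 2) / 2) - 0 -
      (Real.log ρ / 2 + Real.log (2 * a / (1 - a ^ 2)) / 2 + Real.log 2 / 2) = 0 := by
    linarith
  rw [e0] at hfin2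
  refine hfin2.congr fun m => ?_
  have hA1 := hA (m + 1)
  have hb1 := bc_pos (m + 1)
  have hch := Real.cosh_pos (B m)
  have hN : (0 : ℝ) < m + 1 := by positivity
  have e1 : (ac ρ (m + 1) / (bc (m + 1) * ρ ^ (m + 1))) *
      (bc (m + 1) * √(Real.pi * ((m + 1 : ℕ) : ℝ))) * (1 / Real.cosh (B m) / (2 * ac ρ (m + 1)))
      = √(Real.pi * (m + 1)) * (ρ ^ (m + 1))⁻¹ * (Real.cosh (B m))⁻¹ * 2⁻¹ := by
    push_cast
    have := pow_pos hρ0 (m + 1)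
    field_simp
  have e2 : Real.log ((1 + a) / (1 - a)) = -Real.log ρ := by
    rw [hρ, ← Real.log_inv, inv_div]
  have e3 : Real.log (2 * Real.pi) = Real.log 2 + Real.log Real.pi :=
    Real.log_mul two_ne_zero Real.pi_ne_zero
  simp only [Function.comp]
  rw [e1, e2, e3, Real.log_mul (by positivity) (by positivity),
    Real.log_mul (by positivity) (by positivity), Real.log_mul (by positivity) (by positivity),
    Real.log_inv, Real.log_inv, Real.log_inv, Real.log_pow, Real.log_sqrt (by positivity),
    Real.log_mul Real.pi_ne_zero hN.ne']
  have := log_cosh_eq (B m)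
  push_cast
  linarith

/-! ### The regions and their conformal maps -/

lemma isOpen_Q : IsOpen Q :=
  (isOpen_lt continuous_const Complex.continuous_re).inter
    (isOpen_lt continuous_const Complex.continuous_im)

lemma convex_Q : Convex ℝ Q :=
  (convex_halfSpace_re_gt 0).inter (convex_halfSpace_im_gt 0)

lemma closure_Q : closure Q = {z | 0 ≤ z.re ∧ 0 ≤ z.im} := by
  have : Q = Ioi 0 ×ℂ Ioi 0 := rfl
  rw [this, Complex.closure_reProdIm, closure_Ioi]
  rfl

lemma gB_continuous (B : ℝ) : Continuous (gB B) := by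
  unfold gB
  refine Continuous.if_le continuous_const ?_ continuous_id continuous_const ?_
  · refine Real.continuous_arccos.comp ?_
    exact continuous_const.div Real.continuous_cosh fun y => (Real.cosh_pos y).ne'
  · rintro y rfl
    rw [div_self (Real.cosh_pos _).ne', Real.arccos_one]

lemma gB_nonneg (B y : ℝ) : 0 ≤ gB B y := by
  unfold gB; split_ifs
  · exact le_rfl
  · exact Real.arccos_nonneg _

lemma gB_lt (B y : ℝ) : gB B y < Real.pi / 2 := by
  unfold gB; split_ifs
  · positivity
  · exact Real.arccos_lt_pi_div_two.mpr (div_pos (Real.cosh_pos _) (Real.cosh_pos _))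

lemma gB_lt_M (B y : ℝ) (m : ℕ) : gB B y < Real.pi * (m + 1) := by
  have := gB_lt B y
  have : 0 ≤ Real.pi * m := by positivity
  have := Real.pi_pos
  linarith

/-- The curved boundary of `Ω_{B,m}` lies on the curve `Re (cos w) = cosh B`. -/
lemma cos_gB {B y : ℝ} (hB : 0 < B) (hy : B ≤ y) :
    Real.cos (gB B y) * Real.cosh y = Real.cosh B := by
  have hp := Real.cosh_pos y
  unfold gB; split_ifs with h
  · rw [le_antisymm h hy, Real.cos_zero, one_mul]
  · rw [Real.cos_arccos, div_mul_cancel₀ _ hp.ne']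
    · have : 0 < Real.cosh B / Real.cosh y := div_pos (Real.cosh_pos _) hp
      linarith
    · rw [div_le_one hp, Real.cosh_le_cosh, abs_of_pos hB, abs_of_pos (by linarith)]
      exact hy

lemma closure_Ω_sub (B : ℝ) (m : ℕ) : closure (ΩBm B m) ⊆
    {z | 0 ≤ z.im ∧ gB B z.im ≤ z.re ∧ z.re ≤ Real.pi * (m + 1)} := by
  refine closure_minimal (fun z hz => ⟨hz.1.le, hz.2.1.le, hz.2.2.le⟩) ?_
  refine (isClosed_le continuous_const Complex.continuous_im).inter
    ((isClosed_le ((gB_continuous B).comp Complex.continuous_im) Complex.continuous_re).inter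
    (isClosed_le Complex.continuous_re continuous_const))

/-- The hypotheses on a single normalized conformal map `φ : Q → Ω_{B,m}`. -/
structure NormalizedMap (a B : ℝ) (m : ℕ) (φ : ℂ → ℂ) : Prop where
  ha0 : 0 < a
  ha1 : a < 1
  hB : 0 < B
  cont : ContinuousOn φ (closure Q)
  maps : MapsTo φ (closure Q) (closure (ΩBm B m))
  holo : DifferentiableOn ℂ φ Q
  bij : BijOn φ Q (ΩBm B m)
  lim : Tendsto (fun z => ‖φ z‖) (comap (fun z : ℂ => ‖z‖) atTop ⊓ principal Q) atTop
  at_zero : φ 0 = (B : ℂ) * Complex.I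
  at_a : φ a = 0
  at_one : φ 1 = (Real.pi * (m + 1) : ℝ)

namespace NormalizedMap

variable {a B : ℝ} {m : ℕ} {φ : ℂ → ℂ}

lemma isOpen_image (h : NormalizedMap a B m φ) {s : Set ℂ} (hs : s ⊆ Q) (ho : IsOpen s) :
    IsOpen (φ '' s) := by
  have han : AnalyticOnNhd ℂ φ Q := h.holo.analyticOnNhd isOpen_Q
  rcases han.is_constant_or_isOpen convex_Q.isPreconnected with ⟨w, hw⟩ | h'
  · exfalso
    have h1 : (1 + Complex.I) ∈ Q := by simp [Q]
    have h2 : (2 + Complex.I) ∈ Q := by simp [Q]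
    have := h.bij.injOn h1 h2 ((hw _ h1).trans (hw _ h2).symm)
    have := congrArg Complex.re this
    norm_num at this
  · exact h' s hs ho

/-- Boundary points of the quadrant are not sent into the open region. -/
lemma boundary (h : NormalizedMap a B m φ) {z : ℂ} (hz : z ∈ closure Q) (hzQ : z ∉ Q) :
    φ z ∉ ΩBm B m := by
  intro hw
  obtain ⟨z', hz', he⟩ := h.bij.surjOn hw
  have hne : z ≠ z' := fun e => hzQ (e ▸ hz')
  obtain ⟨u, v, hu, hv, hzu, hzv, huv⟩ := t2_separation hne
  have hopen := h.isOpen_image (inter_subset_left (s := Q) (t := v)) (isOpen_Q.inter hv)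
  have hmem : φ z ∈ φ '' (Q ∩ v) := ⟨z', ⟨hz', hzv⟩, he⟩
  have hc : Tendsto φ (nhdsWithin z Q) (nhds (φ z)) :=
    (h.cont z hz).mono_left (nhdsWithin_mono z subset_closure)
  have : (nhdsWithin z Q).NeBot := mem_closure_iff_nhdsWithin_neBot.mp hz
  have h1 := hc.eventually (hopen.mem_nhds hmem)
  have h2 : ∀ᶠ x in nhdsWithin z Q, x ∈ u := mem_nhdsWithin_of_mem_nhds (hu.mem_nhds hzu)
  obtain ⟨x, hx1, hx2, hx3⟩ := (h1.and (h2.and self_mem_nhdsWithin)).exists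
  obtain ⟨y, hy, hyx⟩ := hx1
  have := h.bij.injOn hy.1 hx3 hyx
  exact huv.le_bot ⟨hx2, this ▸ hy.2⟩

lemma range_closure (h : NormalizedMap a B m φ) {z : ℂ} (hz : z ∈ closure Q) :
    0 ≤ (φ z).im ∧ gB B (φ z).im ≤ (φ z).re ∧ (φ z).re ≤ Real.pi * (m + 1) :=
  closure_Ω_sub B m (h.maps hz)

/-- The continuous inverse of the conformal map. -/
lemma inverse (h : NormalizedMap a B m φ) : ∃ ψ : ℂ → ℂ, ContinuousOn ψ (ΩBm B m) ∧
    (∀ w ∈ ΩBm B m, ψ w ∈ Q ∧ φ (ψ w) = w) ∧ ∀ z ∈ Q, ψ (φ z) = z := by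
  have hinv := h.bij.invOn_invFunOn
  have hmem : ∀ w ∈ ΩBm B m, Function.invFunOn φ Q w ∈ Q := fun w hw =>
    h.bij.surjOn.mapsTo_invFunOn hw
  refine ⟨Function.invFunOn φ Q, ?_, fun w hw => ⟨hmem w hw, hinv.2 hw⟩, fun z hz => hinv.1 hz⟩
  rw [continuousOn_iff']
  intro t ht
  refine ⟨φ '' (Q ∩ t), h.isOpen_image inter_subset_left (isOpen_Q.inter ht), ?_⟩
  ext w
  constructor
  · rintro ⟨hw1, hw2⟩
    exact ⟨⟨_, ⟨hmem w hw2, hw1⟩, hinv.2 hw2⟩, hw2⟩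
  · rintro ⟨⟨z, hz, rfl⟩, hw2⟩
    refine ⟨?_, hw2⟩
    rw [mem_preimage, hinv.1 hz.1]
    exact hz.2

end NormalizedMap

/-- Coordinates straightening `Ω_{B,m}` to the half-strip `(0, 1) × (0, ∞)`. The denominator never
vanishes, by `gB_lt_M`, so the map is a homeomorphism of the whole plane. -/
noncomputable def straighten (B : ℝ) (m : ℕ) (w : ℂ) : ℝ × ℝ :=
  ((w.re - gB B w.im) / (Real.pi * (m + 1) - gB B w.im), w.im)

/-- The inverse of `straighten`. -/
noncomputable def unstraighten (B : ℝ) (m : ℕ) (p : ℝ × ℝ) : ℂ :=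
  ⟨gB B p.2 + p.1 * (Real.pi * (m + 1) - gB B p.2), p.2⟩

lemma straighten_continuous (B : ℝ) (m : ℕ) : Continuous (straighten B m) := by
  unfold straighten
  have := gB_continuous B
  refine Continuous.prodMk (Continuous.div (by fun_prop) (by fun_prop) fun w => ?_) (by fun_prop)
  linarith [gB_lt_M B w.im m]

lemma unstraighten_continuous (B : ℝ) (m : ℕ) : Continuous (unstraighten B m) := by
  have := gB_continuous B
  have e : unstraighten B m = fun p : ℝ × ℝ =>
      ((gB B p.2 + p.1 * (Real.pi * (m + 1) - gB B p.2) : ℝ) : ℂ) + (p.2 : ℂ) * Complex.I := by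
    funext p
    rw [← Complex.mk_eq_add_mul_I]; rfl
  rw [e]
  fun_prop

lemma unstraighten_straighten (B : ℝ) (m : ℕ) (w : ℂ) :
    unstraighten B m (straighten B m w) = w := by
  have := gB_lt_M B w.im m
  refine Complex.ext ?_ rfl
  simp only [unstraighten, straighten]
  rw [div_mul_cancel₀ _ (by linarith)]
  ring

lemma straighten_unstraighten (B : ℝ) (m : ℕ) (p : ℝ × ℝ) :
    straighten B m (unstraighten B m p) = p := by
  have := gB_lt_M B p.2 m
  refine Prod.ext ?_ rfl
  simp only [unstraighten, straighten]
  rw [div_eq_iff (by linarith)]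
  ring

lemma mem_Ω_iff (B : ℝ) (m : ℕ) (w : ℂ) :
    w ∈ ΩBm B m ↔ straighten B m w ∈ Ioo (0 : ℝ) 1 ×ˢ Ioi (0 : ℝ) := by
  have := gB_lt_M B w.im m
  have hp : 0 < Real.pi * (m + 1) - gB B w.im := by linarith
  simp only [ΩBm, straighten, mem_ofPred_eq, mem_prod, mem_Ioo, mem_Ioi, div_lt_one hp,
    div_pos_iff_of_pos_right hp]
  constructor
  · rintro ⟨h1, h2, h3⟩; exact ⟨⟨by linarith, by linarith⟩, h1⟩
  · rintro ⟨⟨h2, h3⟩, h1⟩; exact ⟨h1, by linarith, by linarith⟩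

/-- Intersections of `Ω_{B,m}` with balls in the straightened coordinates are connected. -/
lemma nbhd_preconnected (B : ℝ) (m : ℕ) (c : ℝ × ℝ) (r : ℝ) :
    IsPreconnected {w | w ∈ ΩBm B m ∧ straighten B m w ∈ Metric.ball c r} := by
  have e : {w | w ∈ ΩBm B m ∧ straighten B m w ∈ Metric.ball c r} =
      unstraighten B m '' ((Ioo (0 : ℝ) 1 ×ˢ Ioi (0 : ℝ)) ∩ Metric.ball c r) := by
    ext w
    constructor
    · rintro ⟨h1, h2⟩
      exact ⟨straighten B m w, ⟨(mem_Ω_iff B m w).mp h1, h2⟩, unstraighten_straighten B m w⟩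
    · rintro ⟨p, ⟨h1, h2⟩, rfl⟩
      refine ⟨(mem_Ω_iff B m _).mpr ?_, ?_⟩ <;> rw [straighten_unstraighten] <;> assumption
  rw [e]
  have hc : Convex ℝ ((Ioo (0 : ℝ) 1 ×ˢ Ioi (0 : ℝ)) ∩ Metric.ball c r) :=
    ((convex_Ioo 0 1).prod (convex_Ioi 0)).inter (convex_ball c r)
  exact hc.isPreconnected.image _ (unstraighten_continuous B m).continuousOn

/-- A parametrization of the boundary of the quadrant by `s = Re z²`. -/
noncomputable def bdry (s : ℝ) : ℂ := ⟨√s, √(-s)⟩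

lemma bdry_continuous : Continuous bdry := by
  have e : bdry = fun s : ℝ => ((√s : ℝ) : ℂ) + ((√(-s) : ℝ) : ℂ) * Complex.I := by
    funext s; rw [← Complex.mk_eq_add_mul_I]; rfl
  rw [e]
  fun_prop

lemma bdry_mem (s : ℝ) : bdry s ∈ closure Q := by
  rw [closure_Q]; exact ⟨Real.sqrt_nonneg _, Real.sqrt_nonneg _⟩

lemma bdry_notMem (s : ℝ) : bdry s ∉ Q := by
  rintro ⟨h1, h2⟩
  have h1' := Real.sqrt_pos.mp h1
  have h2' := Real.sqrt_pos.mp h2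
  linarith

lemma bdry_nonneg {x : ℝ} (hx : 0 ≤ x) : bdry (x ^ 2) = x := by
  refine Complex.ext ?_ ?_
  · simp [bdry, Real.sqrt_sq hx]
  · simp only [bdry, Complex.ofReal_im]
    exact Real.sqrt_eq_zero_of_nonpos (by nlinarith)

lemma bdry_nonpos {y : ℝ} (hy : 0 ≤ y) : bdry (-y ^ 2) = y * Complex.I := by
  refine Complex.ext ?_ ?_
  · simp [bdry, Real.sqrt_eq_zero_of_nonpos (by nlinarith : -y ^ 2 ≤ 0)]
  · simp [bdry, Real.sqrt_sq hy]

/-- The function `Re z²`. -/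
def reSq (z : ℂ) : ℝ := z.re ^ 2 - z.im ^ 2

lemma reSq_continuous : Continuous reSq := by unfold reSq; fun_prop

lemma reSq_bdry (s : ℝ) : reSq (bdry s) = s := by
  simp only [reSq, bdry]
  rcases le_total 0 s with h | h
  · rw [Real.sq_sqrt h, Real.sqrt_eq_zero_of_nonpos (by linarith)]; ring
  · rw [Real.sq_sqrt (by linarith : 0 ≤ -s), Real.sqrt_eq_zero_of_nonpos h]; ring

lemma eq_bdry {z : ℂ} (hz : z ∈ closure Q) (hzQ : z ∉ Q) : z = bdry (reSq z) := by
  rw [closure_Q] at hz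
  obtain ⟨h1, h2⟩ := hz
  have : z.re = 0 ∨ z.im = 0 := by
    by_contra! hh
    exact hzQ ⟨lt_of_le_of_ne h1 hh.1.symm, lt_of_le_of_ne h2 hh.2.symm⟩
  rcases this with h | h
  · refine Complex.ext ?_ ?_
    · simp only [bdry, reSq, h]
      exact (Real.sqrt_eq_zero_of_nonpos (by nlinarith)).symm
    · simp only [bdry, reSq, h]
      rw [show -(0 ^ 2 - z.im ^ 2) = z.im ^ 2 by ring, Real.sqrt_sq h2]
  · refine Complex.ext ?_ ?_
    · simp only [bdry, reSq, h]
      rw [show z.re ^ 2 - 0 ^ 2 = z.re ^ 2 by ring, Real.sqrt_sq h1]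
    · simp only [bdry, reSq, h]
      exact (Real.sqrt_eq_zero_of_nonpos (by nlinarith)).symm

namespace NormalizedMap

variable {a B : ℝ} {m : ℕ} {φ : ℂ → ℂ}

/-- Properness of `φ`: the preimage of a bounded set is bounded. -/
lemma bounded_preimage (h : NormalizedMap a B m φ) (K : ℝ) :
    ∃ R, ∀ z ∈ Q, ‖φ z‖ ≤ K → ‖z‖ ≤ R := by
  have := h.lim.eventually (eventually_gt_atTop K)
  rw [eventually_inf_principal, eventually_comap] at this
  obtain ⟨R, hR⟩ := eventually_atTop.mp this
  refine ⟨R, fun z hz hK => ?_⟩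
  by_contra! hlt
  exact absurd (hR ‖z‖ hlt.le z rfl hz) (not_lt.mpr hK)

/-- Fibers of the boundary correspondence are connected. If `bdry s₀` and `bdry s₁` have the same
image `w`, small connected neighbourhoods of `w` in `Ω_{B,m}` pull back to connected sets that join
points near `bdry s₀` to points near `bdry s₁`; they meet the hyperbola `Re z² = s`, and a limit
point of these intersections lies on the hyperbola and is sent to `w`. Properness of `φ` keeps them
bounded, and `boundary` forces the limit point to be `bdry s`. -/
lemma fiber (h : NormalizedMap a B m φ) {s₀ s s₁ : ℝ} (h0 : s₀ < s) (h1 : s < s₁)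
    (he : φ (bdry s₀) = φ (bdry s₁)) : φ (bdry s) = φ (bdry s₀) := by
  obtain ⟨ψ, hψc, hψ, hψφ⟩ := h.inverse
  set w := φ (bdry s₀) with hw
  have hstep : ∀ n : ℕ, ∃ z ∈ Q, reSq z = s ∧
      straighten B m (φ z) ∈ Metric.ball (straighten B m w) (1 / ((n : ℝ) + 1)) := by
    intro n
    set r : ℝ := 1 / ((n : ℝ) + 1) with hr
    have hr0 : 0 < r := by positivity
    have hnear : ∀ t, φ (bdry t) = w → ∀ O : Set ℝ, IsOpen O → t ∈ O → ∃ z ∈ Q, reSq z ∈ O ∧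
        straighten B m (φ z) ∈ Metric.ball (straighten B m w) r := by
      intro t ht O hO htO
      have hc : Tendsto φ (nhdsWithin (bdry t) Q) (nhds w) := by
        have := (h.cont _ (bdry_mem t)).mono_left (nhdsWithin_mono (bdry t) subset_closure)
        rwa [ht] at this
      have hne : (nhdsWithin (bdry t) Q).NeBot :=
        mem_closure_iff_nhdsWithin_neBot.mp (bdry_mem t)
      have e1 := (((straighten_continuous B m).tendsto w).comp hc).eventually
        (Metric.ball_mem_nhds _ hr0)
      have e2 : ∀ᶠ z in nhdsWithin (bdry t) Q, reSq z ∈ O := by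
        refine mem_nhdsWithin_of_mem_nhds ((hO.preimage reSq_continuous).mem_nhds ?_)
        rw [mem_preimage, reSq_bdry]; exact htO
      obtain ⟨z, hz1, hz2, hz3⟩ := (e1.and (e2.and self_mem_nhdsWithin)).exists
      exact ⟨z, hz3, hz2, hz1⟩
    obtain ⟨x, hxQ, hxs, hxb⟩ := hnear s₀ rfl (Iio s) isOpen_Iio h0
    obtain ⟨y, hyQ, hys, hyb⟩ := hnear s₁ he.symm (Ioi s) isOpen_Ioi h1
    have hpre := (nbhd_preconnected B m (straighten B m w) r).image ψ
      (hψc.mono fun w hw => hw.1)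
    have hiv := hpre.intermediate_value (a := x) (b := y) (f := reSq)
      ⟨φ x, ⟨h.bij.mapsTo hxQ, hxb⟩, hψφ x hxQ⟩ ⟨φ y, ⟨h.bij.mapsTo hyQ, hyb⟩, hψφ y hyQ⟩
      reSq_continuous.continuousOn
    obtain ⟨z, ⟨v, ⟨hv1, hv2⟩, rfl⟩, hz⟩ := hiv ⟨(mem_Iio.mp hxs).le, (mem_Ioi.mp hys).le⟩
    exact ⟨ψ v, (hψ v hv1).1, hz, by rw [(hψ v hv1).2]; exact hv2⟩
  choose z hzQ hzs hzb using hstep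
  have hχ : Tendsto (fun n => straighten B m (φ (z n))) atTop (nhds (straighten B m w)) := by
    rw [tendsto_iff_dist_tendsto_zero]
    exact squeeze_zero (fun n => dist_nonneg) (fun n => (hzb n).le)
      tendsto_one_div_add_atTop_nhds_zero_nat
  have hφ : Tendsto (fun n => φ (z n)) atTop (nhds w) := by
    have := ((unstraighten_continuous B m).tendsto _).comp hχ
    rw [unstraighten_straighten] at this
    exact this.congr fun n => unstraighten_straighten B m _
  obtain ⟨K, hK⟩ := hφ.norm.bddAbove_range
  obtain ⟨R, hR⟩ := h.bounded_preimage K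
  obtain ⟨z', -, k, hk, hz'⟩ := (isCompact_closedBall (0 : ℂ) R).tendsto_subseq (x := z)
    fun n => by
      rw [mem_closedBall_zero_iff]
      exact hR _ (hzQ n) (hK ⟨n, rfl⟩)
  have hcl : z' ∈ closure Q := mem_closure_of_tendsto hz' (Eventually.of_forall fun n => hzQ _)
  have hq : reSq z' = s := by
    refine tendsto_nhds_unique ((reSq_continuous.tendsto z').comp hz') ?_
    refine tendsto_const_nhds.congr fun n => (hzs _).symm
  have hfz : φ z' = w := by
    have h1 : Tendsto (z ∘ k) atTop (nhdsWithin z' (closure Q)) :=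
      tendsto_nhdsWithin_iff.mpr ⟨hz', Eventually.of_forall fun n => subset_closure (hzQ _)⟩
    exact tendsto_nhds_unique ((h.cont z' hcl).tendsto.comp h1) (hφ.comp hk.tendsto_atTop)
  have hnQ : z' ∉ Q := fun hh =>
    h.boundary (bdry_mem s₀) (bdry_notMem s₀) (hw ▸ hfz ▸ h.bij.mapsTo hh)
  rw [← hq, ← eq_bdry hcl hnQ, hfz]

end NormalizedMap

/-! ### The boundary correspondence -/

namespace NormalizedMap

variable {a B : ℝ} {m : ℕ} {φ : ℂ → ℂ}

/-- A coordinate on the boundary of the straightened half-strip: it equals `-y` on the left side,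
`x` on the bottom and `1 + y` on the right side. -/
noncomputable def edge (p : ℝ × ℝ) : ℝ := p.1 + p.2 * (2 * p.1 - 1)

/-- The boundary correspondence in the coordinates `reSq` and `edge`. -/
noncomputable def corr (B : ℝ) (m : ℕ) (φ : ℂ → ℂ) (s : ℝ) : ℝ :=
  edge (straighten B m (φ (bdry s)))

lemma corr_continuous (h : NormalizedMap a B m φ) : Continuous (corr B m φ) := by
  have h1 : Continuous fun s => φ (bdry s) :=
    h.cont.comp_continuous bdry_continuous bdry_mem
  have h2 := (straighten_continuous B m).comp h1
  have h3 : Continuous edge := by unfold edge; fun_prop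
  exact h3.comp h2

/-- A boundary point of the quadrant goes to one of the three sides of `Ω_{B,m}`. -/
lemma sides (h : NormalizedMap a B m φ) (s : ℝ) :
    0 ≤ (φ (bdry s)).im ∧
    ((φ (bdry s)).re = gB B (φ (bdry s)).im ∧ corr B m φ s = -(φ (bdry s)).im ∨
      (φ (bdry s)).im = 0 ∧ 0 ≤ corr B m φ s ∧ corr B m φ s ≤ 1 ∧
        (straighten B m (φ (bdry s))).1 = corr B m φ s ∨
      (φ (bdry s)).re = Real.pi * (m + 1) ∧ corr B m φ s = 1 + (φ (bdry s)).im) := by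
  obtain ⟨h1, h2, h3⟩ := h.range_closure (bdry_mem s)
  have h4 := h.boundary (bdry_mem s) (bdry_notMem s)
  have hM := gB_lt_M B (φ (bdry s)).im m
  refine ⟨h1, ?_⟩
  unfold corr edge straighten
  generalize φ (bdry s) = w at *
  have hp : 0 < Real.pi * (m + 1) - gB B w.im := by linarith
  rcases h1.eq_or_lt with h5 | h5
  · right; left
    rw [← h5] at h2 hp ⊢
    refine ⟨rfl, ?_, ?_, ?_⟩
    · simp only [zero_mul, add_zero]
      exact div_nonneg (by linarith) hp.le
    · simp only [zero_mul, add_zero]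
      rw [div_le_one hp]; linarith
    · simp
  · rcases h2.eq_or_lt with h6 | h6
    · left
      refine ⟨h6.symm, ?_⟩
      rw [← h6]; simp
    · right; right
      have h7 : w.re = Real.pi * (m + 1) := by
        by_contra hne
        exact h4 ⟨h5, h6, lt_of_le_of_ne h3 hne⟩
      refine ⟨h7, ?_⟩
      rw [h7, div_self hp.ne']; ring

/-- The coordinate `edge` is injective on the boundary of the half-strip. -/
lemma eq_of_corr_eq (h : NormalizedMap a B m φ) {s t : ℝ} (he : corr B m φ s = corr B m φ t) :
    φ (bdry s) = φ (bdry t) := by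
  rw [← unstraighten_straighten B m (φ (bdry s)), ← unstraighten_straighten B m (φ (bdry t))]
  congr 1
  obtain ⟨h1, h2⟩ := h.sides s
  obtain ⟨h3, h4⟩ := h.sides t
  have key : ∀ s, (φ (bdry s)).re = gB B (φ (bdry s)).im →
      (straighten B m (φ (bdry s))).1 = 0 := by
    intro s hs
    simp [straighten, hs]
  have key' : ∀ s, (φ (bdry s)).re = Real.pi * (m + 1) →
      (straighten B m (φ (bdry s))).1 = 1 := by
    intro s hs
    have hM := gB_lt_M B (φ (bdry s)).im m
    simp only [straighten, hs]
    exact div_self (by linarith)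
  have hi : ∀ s, (straighten B m (φ (bdry s))).2 = (φ (bdry s)).im := fun s => rfl
  apply Prod.ext
  · rcases h2 with ⟨e1, e2⟩ | ⟨e1, e2, e3, e4⟩ | ⟨e1, e2⟩ <;>
    rcases h4 with ⟨f1, f2⟩ | ⟨f1, f2, f3, f4⟩ | ⟨f1, f2⟩
    · rw [key _ e1, key _ f1]
    · rw [key _ e1, f4]; linarith
    · linarith
    · rw [key _ f1, e4]; linarith
    · rw [e4, f4, he]
    · rw [key' _ f1, e4]; linarith
    · linarith
    · rw [key' _ e1, f4]; linarith
    · rw [key' _ e1, key' _ f1]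
  · rw [hi, hi]
    rcases h2 with ⟨e1, e2⟩ | ⟨e1, e2, e3, e4⟩ | ⟨e1, e2⟩ <;>
    rcases h4 with ⟨f1, f2⟩ | ⟨f1, f2, f3, f4⟩ | ⟨f1, f2⟩ <;> linarith

lemma corr_fiber (h : NormalizedMap a B m φ) {s₀ s s₁ : ℝ} (h0 : s₀ < s) (h1 : s < s₁)
    (he : corr B m φ s₀ = corr B m φ s₁) : corr B m φ s = corr B m φ s₀ := by
  have := h.fiber h0 h1 (h.eq_of_corr_eq he)
  unfold corr; rw [this]

lemma corr_of (h : NormalizedMap a B m φ) : corr B m φ 0 = -B ∧ corr B m φ (a ^ 2) = 0 ∧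
    corr B m φ 1 = 1 := by
  have hB := h.hB
  refine ⟨?_, ?_, ?_⟩
  · have := bdry_nonneg (le_refl (0 : ℝ))
    rw [zero_pow two_ne_zero, Complex.ofReal_zero] at this
    unfold corr
    rw [this, h.at_zero]
    simp [straighten, edge, gB]
  · unfold corr
    rw [bdry_nonneg h.ha0.le, h.at_a]
    simp [straighten, edge, gB, hB.le]
  · have := bdry_nonneg (zero_le_one (α := ℝ))
    rw [one_pow, Complex.ofReal_one] at this
    unfold corr
    rw [this, h.at_one]
    have : Real.pi * ((m : ℝ) + 1) ≠ 0 := by positivity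
    simp only [straighten, edge, gB, hB.le, if_true, Complex.ofReal_re, Complex.ofReal_im,
      sub_zero, zero_mul, add_zero]
    exact div_self this

/-- With connected fibers and the three normalized values of `corr_of`, the intermediate value
theorem sends the imaginary axis to the left side above `iB`; likewise in `corr_pos` and `corr_mid`
for the two parts of the real axis. -/
lemma corr_neg (h : NormalizedMap a B m φ) {s : ℝ} (hs : s ≤ 0) : corr B m φ s ≤ -B := by
  obtain ⟨e0, ea, e1⟩ := h.corr_of
  have hB := h.hB
  by_contra! hlt
  rcases hs.eq_or_lt with rfl | hs
  · linarith
  have hc := h.corr_continuous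
  obtain ⟨v, hv1, hv2⟩ := exists_between (lt_min hlt (by linarith : -B < 1))
  have hv3 := hv2.trans_le (min_le_left _ _)
  have hv4 := hv2.trans_le (min_le_right _ _)
  obtain ⟨x, hx, hxv⟩ := intermediate_value_Ioo' hs.le hc.continuousOn ⟨by rwa [e0], hv3⟩
  obtain ⟨y, hy, hyv⟩ := intermediate_value_Ioo zero_le_one hc.continuousOn
    ⟨by rwa [e0], by rwa [e1]⟩
  have := h.corr_fiber hx.2 hy.1 (hxv.trans hyv.symm)
  linarith

lemma corr_pos (h : NormalizedMap a B m φ) {s : ℝ} (hs : 0 ≤ s) : -B ≤ corr B m φ s := by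
  obtain ⟨e0, ea, e1⟩ := h.corr_of
  have hB := h.hB
  by_contra! hlt
  rcases hs.eq_or_lt with rfl | hs
  · linarith
  have hc := h.corr_continuous
  rcases lt_trichotomy s 1 with h1 | rfl | h1
  · obtain ⟨x, hx, hxv⟩ := intermediate_value_Ioo h1.le hc.continuousOn
      (show -B ∈ Ioo _ _ from ⟨hlt, by linarith⟩)
    have := h.corr_fiber hs hx.1 (e0.trans hxv.symm)
    linarith
  · linarith
  · obtain ⟨x, hx, hxv⟩ := intermediate_value_Ioo' h1.le hc.continuousOn
      (show (0 : ℝ) ∈ Ioo _ _ from ⟨by linarith, by linarith⟩)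
    have := h.corr_fiber (pow_lt_one₀ h.ha0.le h.ha1 two_ne_zero) hx.1 (ea.trans hxv.symm)
    linarith

lemma corr_mid (h : NormalizedMap a B m φ) {s : ℝ} (hs : a ^ 2 ≤ s) (hs1 : s ≤ 1) :
    corr B m φ s ∈ Icc 0 1 := by
  obtain ⟨e0, ea, e1⟩ := h.corr_of
  have hc := h.corr_continuous
  rcases hs.eq_or_lt with rfl | hs
  · rw [ea]; simp
  rcases hs1.eq_or_lt with rfl | hs1
  · rw [e1]; simp
  constructor
  · by_contra! hlt
    obtain ⟨x, hx, hxv⟩ := intermediate_value_Ioo hs1.le hc.continuousOn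
      (show (0 : ℝ) ∈ Ioo _ _ from ⟨hlt, by linarith⟩)
    have := h.corr_fiber hs hx.1 (ea.trans hxv.symm)
    linarith
  · by_contra! hlt
    obtain ⟨x, hx, hxv⟩ := intermediate_value_Ioo hs.le hc.continuousOn
      (show (1 : ℝ) ∈ Ioo _ _ from ⟨by linarith, hlt⟩)
    have := h.corr_fiber hx.2 hs1 (hxv.trans e1.symm)
    linarith

lemma cos_re (w : ℂ) : (Complex.cos w).re = Real.cos w.re * Real.cosh w.im := by
  rw [Complex.cos_eq]
  simp [← Complex.ofReal_cos, ← Complex.ofReal_cosh, ← Complex.ofReal_sin, ← Complex.ofReal_sinh]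

lemma cos_im (w : ℂ) : (Complex.cos w).im = -(Real.sin w.re * Real.sinh w.im) := by
  rw [Complex.cos_eq]
  simp [← Complex.ofReal_cos, ← Complex.ofReal_cosh, ← Complex.ofReal_sin, ← Complex.ofReal_sinh]

/-- The nonnegative imaginary axis is sent to the curve `Re (cos w) = cosh B`. -/
lemma re_on_imag (h : NormalizedMap a B m φ) {y : ℝ} (hy : 0 ≤ y) :
    (Complex.cos (φ (y * Complex.I))).re = Real.cosh B := by
  rw [← bdry_nonpos hy]
  have h1 := h.corr_neg (s := -y ^ 2) (by nlinarith)
  obtain ⟨h2, h3⟩ := h.sides (-y ^ 2)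
  have hB := h.hB
  rcases h3 with ⟨e1, e2⟩ | ⟨e1, e2, e3, e4⟩ | ⟨e1, e2⟩
  · rw [cos_re, e1]
    exact cos_gB hB (by linarith)
  · linarith
  · linarith

/-- The nonnegative real axis is sent to the segment `[0, iB]` followed by the bottom and the right
side of `Ω_{B,m}`, on all of which `cos` is real. -/
lemma im_on_real (h : NormalizedMap a B m φ) {x : ℝ} (hx : 0 ≤ x) :
    (Complex.cos (φ x)).im = 0 := by
  rw [← bdry_nonneg hx]
  have h1 := h.corr_pos (s := x ^ 2) (by nlinarith)
  obtain ⟨h2, h3⟩ := h.sides (x ^ 2)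
  rw [cos_im]
  rcases h3 with ⟨e1, e2⟩ | ⟨e1, e2, e3, e4⟩ | ⟨e1, e2⟩
  · rw [e1, gB, if_pos (by linarith), Real.sin_zero]; ring
  · rw [e1, Real.sinh_zero]; ring
  · have : Real.sin (Real.pi * (m + 1)) = 0 := by
      rw [mul_comm]; exact_mod_cast Real.sin_nat_mul_pi (m + 1)
    rw [e1, this]; ring

lemma real_on_mid (h : NormalizedMap a B m φ) {x : ℝ} (hx : x ∈ Icc a 1) :
    (φ x).im = 0 := by
  have hx0 : 0 ≤ x := h.ha0.le.trans hx.1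
  rw [← bdry_nonneg hx0]
  obtain ⟨h1, h1'⟩ := h.corr_mid (s := x ^ 2) (pow_le_pow_left₀ h.ha0.le hx.1 2)
    (pow_le_one₀ hx0 hx.2)
  obtain ⟨h2, h3⟩ := h.sides (x ^ 2)
  rcases h3 with ⟨e1, e2⟩ | ⟨e1, e2, e3, e4⟩ | ⟨e1, e2⟩
  · linarith
  · exact e1
  · linarith

end NormalizedMap

/-! ### Schwarz reflection in the axes -/

/-- Counterclockwise integral of `E` along the boundary of `[x₁, x₂] × [y₁, y₂]`. -/
noncomputable def rectInt (E : ℂ → ℂ) (x₁ x₂ y₁ y₂ : ℝ) : ℂ :=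
  (∫ x : ℝ in x₁..x₂, E (x + y₁ * Complex.I)) - (∫ x : ℝ in x₁..x₂, E (x + y₂ * Complex.I)) +
    Complex.I • (∫ y : ℝ in y₁..y₂, E (x₂ + y * Complex.I)) -
    Complex.I • (∫ y : ℝ in y₁..y₂, E (x₁ + y * Complex.I))

lemma rectInt_add_left {E : ℂ → ℂ} (hE : Continuous E) (x₁ x₂ x₃ y₁ y₂ : ℝ) :
    rectInt E x₁ x₃ y₁ y₂ = rectInt E x₁ x₂ y₁ y₂ + rectInt E x₂ x₃ y₁ y₂ := by
  have hi : ∀ (y a b : ℝ), IntervalIntegrable (fun x : ℝ => E (x + y * Complex.I))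
      MeasureTheory.volume a b := fun y a b => (by fun_prop : Continuous _).intervalIntegrable a b
  unfold rectInt
  rw [← intervalIntegral.integral_add_adjacent_intervals (hi y₁ x₁ x₂) (hi y₁ x₂ x₃),
    ← intervalIntegral.integral_add_adjacent_intervals (hi y₂ x₁ x₂) (hi y₂ x₂ x₃)]
  ring

lemma rectInt_add_right {E : ℂ → ℂ} (hE : Continuous E) (x₁ x₂ y₁ y₂ y₃ : ℝ) :
    rectInt E x₁ x₂ y₁ y₃ = rectInt E x₁ x₂ y₁ y₂ + rectInt E x₁ x₂ y₂ y₃ := by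
  have hi : ∀ (x a b : ℝ), IntervalIntegrable (fun y : ℝ => E (x + y * Complex.I))
      MeasureTheory.volume a b := fun x a b => (by fun_prop : Continuous _).intervalIntegrable a b
  unfold rectInt
  rw [← intervalIntegral.integral_add_adjacent_intervals (hi x₁ y₁ y₂) (hi x₁ y₂ y₃),
    ← intervalIntegral.integral_add_adjacent_intervals (hi x₂ y₁ y₂) (hi x₂ y₂ y₃), smul_add,
    smul_add]
  ring

lemma rectInt_symm_left (E : ℂ → ℂ) (x₁ x₂ y₁ y₂ : ℝ) :
    rectInt E x₂ x₁ y₁ y₂ = -rectInt E x₁ x₂ y₁ y₂ := by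
  unfold rectInt
  rw [intervalIntegral.integral_symm x₁ x₂, intervalIntegral.integral_symm x₁ x₂]
  ring

lemma rectInt_symm_right (E : ℂ → ℂ) (x₁ x₂ y₁ y₂ : ℝ) :
    rectInt E x₁ x₂ y₂ y₁ = -rectInt E x₁ x₂ y₁ y₂ := by
  unfold rectInt
  rw [intervalIntegral.integral_symm y₁ y₂, intervalIntegral.integral_symm y₁ y₂]
  simp only [smul_neg]
  ring

/-- The coordinate axes are removable for continuous functions: rectangles with a corner at the
origin have vanishing boundary integral, hence so does every rectangle, by subdivision along the
axes, and the theorem of Morera applies. -/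
lemma entire_of_off_axes {E : ℂ → ℂ} (hE : Continuous E)
    (hd : ∀ z : ℂ, z.re ≠ 0 → z.im ≠ 0 → DifferentiableAt ℂ E z) : Differentiable ℂ E := by
  have h00 : ∀ x y : ℝ, rectInt E 0 x 0 y = 0 := by
    intro x y
    have := Complex.integral_boundary_rect_eq_zero_of_continuousOn_of_differentiableOn E 0 ⟨x, y⟩
      hE.continuousOn (fun z hz => (hd z ?_ ?_).differentiableWithinAt)
    · exact this
    · rintro h0
      have := hz.1
      simp only [mem_preimage, mem_Ioo, h0, Complex.zero_re] at this
      obtain ⟨h1, h2⟩ := this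
      rcases le_total 0 x with h | h <;> simp [h] at h1 h2
    · rintro h0
      have := hz.2
      simp only [mem_preimage, mem_Ioo, h0, Complex.zero_im] at this
      obtain ⟨h1, h2⟩ := this
      rcases le_total 0 y with h | h <;> simp [h] at h1 h2
  have hall : ∀ x₁ x₂ y₁ y₂ : ℝ, rectInt E x₁ x₂ y₁ y₂ = 0 := by
    intro x₁ x₂ y₁ y₂
    rw [rectInt_add_left hE x₁ 0 x₂, rectInt_add_right hE x₁ 0 y₁ 0 y₂,
      rectInt_add_right hE 0 x₂ y₁ 0 y₂, rectInt_symm_left E 0 x₁, rectInt_symm_left E 0 x₁,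
      rectInt_symm_right E 0 x₁ 0 y₁, rectInt_symm_right E 0 x₂ 0 y₁, h00, h00, h00, h00]
    simp
  have hcons : Complex.IsConservativeOn E univ := by
    intro z w _
    rw [← add_eq_zero_iff_eq_neg, Complex.wedgeIntegral_add_wedgeIntegral_eq]
    exact hall z.re w.re z.im w.im
  exact differentiableOn_univ.mp
    ((Complex.isConservativeOn_and_continuousOn_iff_isDifferentiableOn isOpen_univ).mp
      ⟨hcons, hE.continuousOn⟩)

/-- Folding of the plane onto the closed first quadrant. -/
def fold (z : ℂ) : ℂ := ⟨|z.re|, |z.im|⟩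

lemma fold_continuous : Continuous fold := by
  have e : fold = fun z : ℂ => ((|z.re| : ℝ) : ℂ) + ((|z.im| : ℝ) : ℂ) * Complex.I := by
    funext s; rw [← Complex.mk_eq_add_mul_I]; rfl
  rw [e]
  fun_prop

lemma fold_mem (z : ℂ) : fold z ∈ closure Q := by
  rw [closure_Q]; exact ⟨abs_nonneg _, abs_nonneg _⟩

lemma fold_of_mem {z : ℂ} (hz : z ∈ closure Q) : fold z = z := by
  rw [closure_Q] at hz
  exact Complex.ext (abs_of_nonneg hz.1) (abs_of_nonneg hz.2)

lemma fold_neg (z : ℂ) : fold (-z) = fold z := by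
  simp [fold]

/-- Extension of a function on the closed quadrant to the plane by Schwarz reflection across both
axes: across the real axis by `conj (f (conj z))`, across the imaginary axis by
`-conj (f (-conj z))`. It is consistent on the axes when `f` is real on the former and imaginary on
the latter. -/
noncomputable def reflect (f : ℂ → ℂ) (z : ℂ) : ℂ :=
  ⟨if 0 ≤ z.re then (f (fold z)).re else -(f (fold z)).re,
    if 0 ≤ z.im then (f (fold z)).im else -(f (fold z)).im⟩

section reflect

variable {f : ℂ → ℂ}

lemma reflect_of_mem {z : ℂ} (hz : z ∈ closure Q) : reflect f z = f z := by
  have h := hz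
  rw [closure_Q] at h
  refine Complex.ext ?_ ?_ <;> simp [reflect, h.1, h.2, fold_of_mem hz]

lemma norm_reflect (z : ℂ) : ‖reflect f z‖ = ‖f (fold z)‖ := by
  rw [Complex.norm_eq_sqrt_sq_add_sq, Complex.norm_eq_sqrt_sq_add_sq]
  unfold reflect
  congr 2
  · dsimp only; split_ifs <;> ring
  · dsimp only; split_ifs <;> ring

lemma fold_re (hre : ∀ y : ℝ, 0 ≤ y → (f (y * Complex.I)).re = 0)
    {z : ℂ} (h : z.re = 0) : (f (fold z)).re = 0 := by
  have : fold z = ((|z.im| : ℝ) : ℂ) * Complex.I :=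
    Complex.ext (by simp [fold, h]) (by simp [fold])
  rw [this, hre _ (abs_nonneg _)]

lemma fold_im (him : ∀ x : ℝ, 0 ≤ x → (f x).im = 0)
    {z : ℂ} (h : z.im = 0) : (f (fold z)).im = 0 := by
  have : fold z = ((|z.re| : ℝ) : ℂ) :=
    Complex.ext (by simp [fold]) (by simp [fold, h])
  rw [this, him _ (abs_nonneg _)]

lemma reflect_neg (hre : ∀ y : ℝ, 0 ≤ y → (f (y * Complex.I)).re = 0)
    (him : ∀ x : ℝ, 0 ≤ x → (f x).im = 0)
    (z : ℂ) : reflect f (-z) = -reflect f z := by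
  refine Complex.ext ?_ ?_
  · simp only [reflect, fold_neg, Complex.neg_re]
    rcases lt_trichotomy z.re 0 with h | h | h
    · rw [if_pos (by linarith), if_neg (by linarith), neg_neg]
    · rw [fold_re hre h]; simp
    · rw [if_neg (by linarith), if_pos (by linarith)]
  · simp only [reflect, fold_neg, Complex.neg_im]
    rcases lt_trichotomy z.im 0 with h | h | h
    · rw [if_pos (by linarith), if_neg (by linarith), neg_neg]
    · rw [fold_im him h]; simp
    · rw [if_neg (by linarith), if_pos (by linarith)]

lemma reflect_continuous (hre : ∀ y : ℝ, 0 ≤ y → (f (y * Complex.I)).re = 0)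
    (him : ∀ x : ℝ, 0 ≤ x → (f x).im = 0)
    (hc : ContinuousOn f (closure Q)) : Continuous (reflect f) := by
  have hcf : Continuous fun z => f (fold z) := hc.comp_continuous fold_continuous fold_mem
  have h1 : Continuous fun z : ℂ => if 0 ≤ z.re then (f (fold z)).re else -(f (fold z)).re := by
    refine Continuous.if_le (Complex.continuous_re.comp hcf) (Complex.continuous_re.comp hcf).neg
      continuous_const (by fun_prop) ?_
    intro z hz
    rw [fold_re hre hz.symm, neg_zero]
  have h2 : Continuous fun z : ℂ => if 0 ≤ z.im then (f (fold z)).im else -(f (fold z)).im := by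
    refine Continuous.if_le (Complex.continuous_im.comp hcf) (Complex.continuous_im.comp hcf).neg
      continuous_const (by fun_prop) ?_
    intro z hz
    rw [fold_im him hz.symm, neg_zero]
  have e : reflect f = fun z : ℂ =>
      ((if 0 ≤ z.re then (f (fold z)).re else -(f (fold z)).re : ℝ) : ℂ) +
      ((if 0 ≤ z.im then (f (fold z)).im else -(f (fold z)).im : ℝ) : ℂ) * Complex.I := by
    funext z; rw [← Complex.mk_eq_add_mul_I]; rfl
  rw [e]
  fun_prop

lemma reflect_differentiable (hre : ∀ y : ℝ, 0 ≤ y → (f (y * Complex.I)).re = 0)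
    (him : ∀ x : ℝ, 0 ≤ x → (f x).im = 0)
    (hc : ContinuousOn f (closure Q)) (hd : DifferentiableOn ℂ f Q) :
    Differentiable ℂ (reflect f) := by
  refine entire_of_off_axes (reflect_continuous hre him hc) ?_
  have hup : ∀ z : ℂ, 0 < z.re → 0 < z.im → DifferentiableAt ℂ (reflect f) z := by
    intro z h1 h2
    have hz : z ∈ Q := ⟨h1, h2⟩
    refine (hd.differentiableAt (isOpen_Q.mem_nhds hz)).congr_of_eventuallyEq ?_
    filter_upwards [isOpen_Q.mem_nhds hz] with w hw
    exact reflect_of_mem (subset_closure hw)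
  have hright : ∀ z : ℂ, 0 < z.re → z.im ≠ 0 → DifferentiableAt ℂ (reflect f) z := by
    intro z h1 h2
    rcases h2.lt_or_gt with h2 | h2
    · have h := hup (starRingEnd ℂ z) (by simpa using h1) (by simpa using h2)
      rw [← differentiableAt_conj_conj_iff] at h
      refine h.congr_of_eventuallyEq ?_
      have ho : IsOpen {w : ℂ | 0 < w.re ∧ w.im < 0} :=
        (isOpen_lt continuous_const Complex.continuous_re).inter
          (isOpen_lt Complex.continuous_im continuous_const)
      filter_upwards [ho.mem_nhds ⟨h1, h2⟩] with w hw
      have hf : fold (starRingEnd ℂ w) = fold w := by simp [fold]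
      obtain ⟨hw1, hw2⟩ := hw
      refine Complex.ext ?_ ?_
      · simp [reflect, hf]
      · simp [reflect, hf, hw2.not_ge, hw2.le]
    · exact hup z h1 h2
  intro z h1 h2
  rcases h1.lt_or_gt with h1 | h1
  · have h := hright (-z) (by simpa using h1) (by simpa using h2)
    have h3 : DifferentiableAt ℂ (fun w => -(reflect f (-w))) z :=
      (DifferentiableAt.comp z h differentiable_neg.differentiableAt).neg
    have e : (fun w => -(reflect f (-w))) = reflect f := by
      funext w; rw [reflect_neg hre him, neg_neg]
    rwa [e] at h3
  · exact hright z h1 h2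

end reflect

/-! ### Entire functions with a pole at infinity -/

/-- An entire function tending to infinity at infinity is asymptotic to a multiple of a power:
`1 / E(1/w)` has a removable zero at the origin, of some order `k`. -/
lemma exists_growth {E : ℂ → ℂ} (hE : Differentiable ℂ E)
    (hlim : Tendsto (fun z => ‖E z‖) (Bornology.cobounded ℂ) atTop) :
    ∃ (k : ℕ) (κ : ℂ), κ ≠ 0 ∧
      Tendsto (fun z => E z / z ^ k) (Bornology.cobounded ℂ) (nhds κ) := by
  have hinv : Tendsto (fun w : ℂ => w⁻¹) (nhdsWithin 0 {0}ᶜ) (Bornology.cobounded ℂ) :=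
    tendsto_inv₀_nhdsNE_zero
  have hinv' : Tendsto (fun w : ℂ => w⁻¹) (Bornology.cobounded ℂ) (nhds 0) :=
    tendsto_inv₀_cobounded
  have hne : ∀ᶠ z in Bornology.cobounded ℂ, E z ≠ 0 := by
    filter_upwards [hlim.eventually_gt_atTop 0] with z hz
    exact norm_pos_iff.mp hz
  have hz0 : ∀ᶠ z in Bornology.cobounded ℂ, z ≠ (0 : ℂ) := by
    filter_upwards [tendsto_norm_cobounded_atTop.eventually_gt_atTop 0] with z hz
    exact norm_pos_iff.mp hz
  set g : ℂ → ℂ := Function.update (fun w => (E w⁻¹)⁻¹) 0 0 with hg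
  have hgne : ∀ w, w ≠ 0 → g w = (E w⁻¹)⁻¹ := fun w hw => Function.update_of_ne hw _ _
  have hgc : ContinuousAt g 0 := by
    rw [continuousAt_update_same]
    refine tendsto_inv₀_cobounded.comp ?_
    exact (tendsto_norm_atTop_iff_cobounded.mp hlim).comp hinv
  have hgd : ∀ᶠ w in nhdsWithin (0 : ℂ) {0}ᶜ, DifferentiableAt ℂ g w := by
    filter_upwards [hinv.eventually hne, self_mem_nhdsWithin] with w hw hw0
    have hw0' : w ≠ 0 := hw0
    have h1 : DifferentiableAt ℂ (fun w => (E w⁻¹)⁻¹) w :=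
      (hE.differentiableAt.comp w (differentiableAt_inv hw0')).inv hw
    refine h1.congr_of_eventuallyEq ?_
    filter_upwards [isOpen_ne.mem_nhds hw0'] with v hv
    exact hgne v hv
  have hga := Complex.analyticAt_of_differentiable_on_punctured_nhds_of_continuousAt hgd hgc
  have hgnz : ∀ᶠ w in nhdsWithin (0 : ℂ) {0}ᶜ, g w ≠ 0 := by
    filter_upwards [hinv.eventually hne, self_mem_nhdsWithin] with w hw hw0
    rw [hgne w hw0]
    exact inv_ne_zero hw
  obtain ⟨k, u, hu, hu0, hgu⟩ := hga.exists_eventuallyEq_pow_smul_nonzero_iff.mpr (by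
    intro h
    obtain ⟨w, hw1, hw2⟩ := (hgnz.and (h.filter_mono nhdsWithin_le_nhds)).exists
    exact hw1 hw2)
  refine ⟨k, (u 0)⁻¹, inv_ne_zero hu0, ?_⟩
  have h1 : Tendsto (fun z : ℂ => (u z⁻¹)⁻¹) (Bornology.cobounded ℂ) (nhds (u 0)⁻¹) :=
    ((hu.continuousAt.tendsto.comp hinv').inv₀ hu0)
  refine h1.congr' ?_
  filter_upwards [hz0, hinv'.eventually hgu] with z hz hgz
  rw [hgne _ (inv_ne_zero hz), inv_inv, sub_zero, smul_eq_mul] at hgz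
  rw [← inv_inv (E z), hgz, inv_pow, mul_inv, inv_inv, mul_div_cancel_left₀ _ (pow_ne_zero k hz)]

/-- An entire function of polynomial growth is a polynomial, by the Cauchy estimates. -/
lemma exists_polynomial_of_growth {E : ℂ → ℂ} (hE : Differentiable ℂ E) {k : ℕ} {κ : ℂ}
    (hk : Tendsto (fun z => E z / z ^ k) (Bornology.cobounded ℂ) (nhds κ)) :
    ∃ P : Polynomial ℂ, P.natDegree ≤ k ∧ ∀ z, P.eval z = E z := by
  obtain ⟨R, hR⟩ : ∃ R : ℝ, ∀ z : ℂ, R ≤ ‖z‖ → ‖E z / z ^ k‖ < ‖κ‖ + 1 := by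
    have h1 := hk.norm.eventually (eventually_lt_nhds (lt_add_one ‖κ‖))
    rw [← comap_norm_atTop, eventually_comap] at h1
    obtain ⟨R, hR⟩ := eventually_atTop.mp h1
    exact ⟨R, fun z hz => hR _ hz z rfl⟩
  have hder : ∀ n, k < n → iteratedDeriv n E 0 = 0 := by
    intro n hn
    rw [← norm_eq_zero]
    refine le_antisymm ?_ (norm_nonneg _)
    have hbound : ∀ᶠ r : ℝ in atTop,
        ‖iteratedDeriv n E 0‖ ≤ n.factorial * (‖κ‖ + 1) * r⁻¹ := by
      filter_upwards [eventually_ge_atTop R, eventually_ge_atTop 1] with r hr hr1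
      have hr0 : 0 < r := by linarith
      have hC : ∀ z ∈ Metric.sphere (0 : ℂ) r, ‖E z‖ ≤ (‖κ‖ + 1) * r ^ k := by
        intro z hz
        have hz' : ‖z‖ = r := mem_sphere_zero_iff_norm.mp hz
        have := (hR z (by rw [hz']; exact hr)).le
        rwa [norm_div, norm_pow, hz', div_le_iff₀ (by positivity)] at this
      refine (Complex.norm_iteratedDeriv_le_of_forall_mem_sphere_norm_le n hr0
        hE.diffContOnCl hC).trans ?_
      obtain ⟨j, rfl⟩ := Nat.exists_eq_add_of_lt hn
      have h2 : r ^ k / r ^ (k + j + 1) ≤ r⁻¹ := by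
        rw [div_le_iff₀ (by positivity), pow_succ, mul_comm, mul_assoc,
          mul_inv_cancel₀ hr0.ne', mul_one]
        exact pow_le_pow_right₀ hr1 (by omega)
      calc _ = ((k + j + 1).factorial * (‖κ‖ + 1)) * (r ^ k / r ^ (k + j + 1)) := by ring
        _ ≤ _ := by gcongr
    have h0 : Tendsto (fun r : ℝ => n.factorial * (‖κ‖ + 1) * r⁻¹) atTop (nhds 0) := by
      simpa using tendsto_inv_atTop_zero.const_mul ((n.factorial : ℝ) * (‖κ‖ + 1))
    exact ge_of_tendsto h0 hbound
  refine ⟨∑ n ∈ Finset.range (k + 1),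
    Polynomial.C ((n.factorial : ℂ)⁻¹ * iteratedDeriv n E 0) * Polynomial.X ^ n, ?_, ?_⟩
  · refine Polynomial.natDegree_sum_le_of_forall_le _ _ fun n hn => ?_
    exact (Polynomial.natDegree_C_mul_X_pow_le _ _).trans
      (Nat.lt_succ_iff.mp (Finset.mem_range.mp hn))
  · intro z
    rw [← Complex.taylorSeries_eq_of_entire' 0 z hE, Polynomial.eval_finsetSum]
    rw [tsum_eq_sum (s := Finset.range (k + 1))]
    · simp
    · intro n hn
      rw [hder n (by simpa using hn)]; simp

/-! ### The odd polynomial extending `cosh B - cos φ` -/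

/-- A continuous angle confined to the sector `|sin| < cos` varies by less than a right angle. -/
lemma angle_variation {v : ℝ → ℝ} {s t : ℝ} (hst : s ≤ t) (hv : ContinuousOn v (Icc s t))
    (hsec : ∀ θ ∈ Icc s t, |Real.sin (v θ)| < Real.cos (v θ)) : v s - Real.pi / 2 < v t := by
  by_contra! hlt
  have hp := Real.pi_pos
  obtain ⟨θ, hθ, he⟩ := intermediate_value_Icc' hst hv
    (show v s - Real.pi / 2 ∈ _ from ⟨hlt, by linarith⟩)
  have h1 := hsec θ hθ
  rw [he, Real.sin_sub_pi_div_two, Real.cos_sub_pi_div_two, abs_neg] at h1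
  have h2 := hsec s (left_mem_Icc.mpr hst)
  have := le_abs_self (Real.sin (v s))
  have := le_abs_self (Real.cos (v s))
  linarith

namespace NormalizedMap

variable {a B : ℝ} {m : ℕ} {φ : ℂ → ℂ}

/-- Since `Re φ` is bounded, `Im φ → ∞` at infinity, on the closed quadrant as well. -/
lemma im_large (h : NormalizedMap a B m φ) (K : ℝ) :
    ∃ R, ∀ z ∈ closure Q, R < ‖z‖ → K ≤ (φ z).im := by
  obtain ⟨R, hR⟩ := h.bounded_preimage (Real.pi * (m + 1) + K)
  refine ⟨R, fun z hz hzR => ?_⟩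
  have hne : (nhdsWithin z Q).NeBot := mem_closure_iff_nhdsWithin_neBot.mp hz
  have hc : Tendsto φ (nhdsWithin z Q) (nhds (φ z)) :=
    (h.cont z hz).mono_left (nhdsWithin_mono z subset_closure)
  have h1 : Real.pi * (m + 1) + K ≤ ‖φ z‖ := by
    refine ge_of_tendsto hc.norm ?_
    have h2 : ∀ᶠ w in nhdsWithin z Q, R < ‖w‖ :=
      mem_nhdsWithin_of_mem_nhds (continuous_norm.tendsto z |>.eventually (lt_mem_nhds hzR))
    filter_upwards [h2, self_mem_nhdsWithin] with w hw hwQ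
    by_contra! hlt
    exact absurd (hR w hwQ hlt.le) (not_le.mpr hw)
  obtain ⟨e1, e2, e3⟩ := h.range_closure hz
  have h3 := Complex.norm_le_abs_re_add_abs_im (φ z)
  rw [abs_of_nonneg e1, abs_of_nonneg ((gB_nonneg B _).trans e2)] at h3
  linarith

lemma sinh_le_norm_cos (w : ℂ) : Real.sinh w.im ≤ ‖Complex.cos w‖ := by
  refine (Real.le_sqrt_of_sq_le ?_).trans_eq (Complex.norm_eq_sqrt_sq_add_sq _).symm
  rw [cos_re, cos_im, mul_pow, Real.cosh_sq]
  have := Real.sin_sq_add_cos_sq w.re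
  have h2 : (-(Real.sin w.re * Real.sinh w.im)) ^ 2 =
    (1 - Real.cos w.re ^ 2) * Real.sinh w.im ^ 2 := by
    rw [← this]; ring
  rw [h2]
  nlinarith [sq_nonneg (Real.cos w.re)]

/-- The entire odd function that equals `cosh B - cos φ` on the closed quadrant. -/
noncomputable def oddExt (B : ℝ) (φ : ℂ → ℂ) : ℂ → ℂ :=
  reflect fun z => (Real.cosh B : ℂ) - Complex.cos (φ z)

lemma oddExt_re (h : NormalizedMap a B m φ) (y : ℝ) (hy : 0 ≤ y) :
    ((Real.cosh B : ℂ) - Complex.cos (φ (y * Complex.I))).re = 0 := by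
  rw [Complex.sub_re, h.re_on_imag hy, Complex.ofReal_re, sub_self]

lemma oddExt_im (h : NormalizedMap a B m φ) (x : ℝ) (hx : 0 ≤ x) :
    ((Real.cosh B : ℂ) - Complex.cos (φ x)).im = 0 := by
  rw [Complex.sub_im, h.im_on_real hx, Complex.ofReal_im, sub_self]

lemma oddExt_of_mem {z : ℂ} (hz : z ∈ closure Q) :
    oddExt B φ z = (Real.cosh B : ℂ) - Complex.cos (φ z) := reflect_of_mem hz

lemma oddExt_neg (h : NormalizedMap a B m φ) (z : ℂ) : oddExt B φ (-z) = -oddExt B φ z :=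
  reflect_neg (f := fun z => (Real.cosh B : ℂ) - Complex.cos (φ z)) h.oddExt_re h.oddExt_im z

lemma oddExt_differentiable (h : NormalizedMap a B m φ) : Differentiable ℂ (oddExt B φ) :=
  reflect_differentiable (f := fun z => (Real.cosh B : ℂ) - Complex.cos (φ z)) h.oddExt_re h.oddExt_im
    (continuousOn_const.sub (Complex.continuous_cos.comp_continuousOn h.cont))
    ((differentiableOn_const _).sub (Complex.differentiable_cos.comp_differentiableOn h.holo))

/-- `|E| → ∞` because `|cos w| ≥ sinh (Im w)`. -/
lemma oddExt_tendsto (h : NormalizedMap a B m φ) :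
    Tendsto (fun z => ‖oddExt B φ z‖) (Bornology.cobounded ℂ) atTop := by
  rw [tendsto_atTop]
  intro K
  obtain ⟨K', hK'⟩ := (Real.sinh_surjective) (K + Real.cosh B)
  obtain ⟨R, hR⟩ := h.im_large K'
  filter_upwards [tendsto_norm_cobounded_atTop.eventually_gt_atTop R] with z hz
  have hn : ‖fold z‖ = ‖z‖ := by
    rw [Complex.norm_eq_sqrt_sq_add_sq, Complex.norm_eq_sqrt_sq_add_sq]
    simp [fold]
  have h1 := hR (fold z) (fold_mem z) (by rwa [hn])
  have h2 := (Real.sinh_le_sinh.mpr h1).trans (sinh_le_norm_cos _)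
  have e : ‖oddExt B φ z‖ = ‖(Real.cosh B : ℂ) - Complex.cos (φ (fold z))‖ :=
    norm_reflect (f := fun z => (Real.cosh B : ℂ) - Complex.cos (φ z)) z
  have h3 := norm_sub_norm_le (Complex.cos (φ (fold z))) (Real.cosh B : ℂ)
  rw [Complex.norm_real, Real.norm_of_nonneg (Real.cosh_pos B).le, norm_sub_rev] at h3
  rw [e]
  linarith

/-- On a large quarter circle, `exp (-iφ)` is close to `-2κ zᵏ`. -/
lemma exp_close (h : NormalizedMap a B m φ) {k : ℕ} (hk : k ≠ 0) {κ : ℂ} (hκ : κ ≠ 0)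
    (hg : Tendsto (fun z => oddExt B φ z / z ^ k) (Bornology.cobounded ℂ) (nhds κ)) :
    ∃ R : ℝ, 0 < R ∧ ∀ z ∈ closure Q, ‖z‖ = R →
      ‖Complex.exp (-(φ z * Complex.I)) / (z ^ k * (-2 * κ)) - 1‖ < 1 / 2 := by
  have h1 : Tendsto (fun z => ‖oddExt B φ z / z ^ k / κ - 1‖) (Bornology.cobounded ℂ) (nhds 0) := by
    have := ((hg.div_const κ).sub_const 1).norm
    rwa [div_self hκ, sub_self, norm_zero] at this
  have h2 := h1.eventually (gt_mem_nhds (show (0 : ℝ) < 1 / 4 by norm_num))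
  rw [← comap_norm_atTop, eventually_comap] at h2
  have hκp : 0 < ‖κ‖ := norm_pos_iff.mpr hκ
  obtain ⟨R, hR, hR1, hR2⟩ := (h2.and ((eventually_ge_atTop (1 : ℝ)).and
    (eventually_ge_atTop ((2 * Real.cosh B + 1) * 2 / ‖κ‖)))).exists
  refine ⟨R, by linarith, fun z hz hzR => ?_⟩
  have hb := hR z hzR
  have hz0 : z ≠ 0 := norm_pos_iff.mp (by linarith)
  obtain ⟨i1, -, -⟩ := h.range_closure hz
  rw [oddExt_of_mem hz] at hb
  have hexp : ‖Complex.exp (φ z * Complex.I)‖ ≤ 1 := by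
    rw [Complex.norm_exp]
    refine Real.exp_le_one_iff.mpr ?_
    simp [i1]
  have hcos : Complex.cos (φ z) =
    (Complex.exp (φ z * Complex.I) + Complex.exp (-(φ z * Complex.I))) / 2 := by
    rw [Complex.cos, neg_mul]
  rw [hcos] at hb
  generalize Complex.exp (φ z * Complex.I) = p at hb hexp
  generalize Complex.exp (-(φ z * Complex.I)) = q at hb ⊢
  have hzk : z ^ k ≠ 0 := pow_ne_zero k hz0
  have hRk : R ≤ ‖z ^ k‖ := by
    rw [norm_pow, hzR]; exact le_self_pow₀ hR1 hk
  generalize z ^ k = s at *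
  have e : q / (s * (-2 * κ)) - 1 = (((Real.cosh B : ℂ) - (p + q) / 2) / s / κ - 1) +
      (p - 2 * (Real.cosh B : ℂ)) / (2 * s * κ) := by
    field_simp
    ring
  have h5 : ‖(p - 2 * (Real.cosh B : ℂ)) / (2 * s * κ)‖ ≤ 1 / 4 := by
    rw [norm_div, norm_mul, norm_mul, Complex.norm_ofNat]
    have h6 : ‖p - 2 * (Real.cosh B : ℂ)‖ ≤ 2 * Real.cosh B + 1 := by
      refine (norm_sub_le _ _).trans ?_
      rw [norm_mul, Complex.norm_real, Real.norm_of_nonneg (Real.cosh_pos B).le,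
        Complex.norm_ofNat]
      linarith
    rw [div_le_iff₀ hκp] at hR2
    rw [div_le_iff₀ (by positivity)]
    nlinarith
  rw [e]
  exact (norm_add_le _ _).trans_lt (by linarith)

/-- The growth exponent is at most `2(m+1)`: along a quarter circle the argument of `zᵏ` grows
by `kπ/2`, while the argument `-Re φ` of `exp (-iφ)` varies by at most the width `π(m+1)`, and
these variations differ by less than `π/2`. -/
lemma exponent_le (h : NormalizedMap a B m φ) {k : ℕ} {κ : ℂ} (hκ : κ ≠ 0)
    (hg : Tendsto (fun z => oddExt B φ z / z ^ k) (Bornology.cobounded ℂ) (nhds κ)) :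
    k ≤ 2 * (m + 1) := by
  by_contra! hlt
  obtain ⟨R, hR0, hR⟩ := h.exp_close (by omega) hκ hg
  have hp := Real.pi_pos
  set c : ℂ := -2 * κ with hc
  have hc0 : c ≠ 0 := mul_ne_zero (by norm_num) hκ
  set z : ℝ → ℂ := fun θ => R * Complex.exp (θ * Complex.I) with hz
  have hzc : Continuous z := by fun_prop
  have hzm : ∀ θ ∈ Icc 0 (Real.pi / 2), z θ ∈ closure Q := by
    intro θ hθ
    rw [closure_Q]
    have h1 := Real.cos_nonneg_of_mem_Icc (x := θ) ⟨by linarith [hθ.1], hθ.2⟩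
    have h2 := Real.sin_nonneg_of_nonneg_of_le_pi hθ.1 (by linarith [hθ.2])
    constructor
    · simp only [hz, Complex.re_ofReal_mul, Complex.exp_ofReal_mul_I_re]; positivity
    · simp only [hz, Complex.im_ofReal_mul, Complex.exp_ofReal_mul_I_im]; positivity
  have hzn : ∀ θ, ‖z θ‖ = R := by
    intro θ
    simp only [hz, norm_mul, Complex.norm_exp_ofReal_mul_I, mul_one, Complex.norm_real]
    exact Real.norm_of_nonneg hR0.le
  set v : ℝ → ℝ := fun θ => -(φ (z θ)).re - k * θ - c.arg with hv
  have hvc : ContinuousOn v (Icc 0 (Real.pi / 2)) := by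
    have h1 : ContinuousOn (fun θ => φ (z θ)) (Icc 0 (Real.pi / 2)) :=
      h.cont.comp hzc.continuousOn hzm
    have h2 : ContinuousOn (fun θ => (φ (z θ)).re) (Icc 0 (Real.pi / 2)) :=
      Complex.continuous_re.comp_continuousOn h1
    exact (h2.neg.sub (by fun_prop)).sub continuousOn_const
  have hsec : ∀ θ ∈ Icc 0 (Real.pi / 2), |Real.sin (v θ)| < Real.cos (v θ) := by
    intro θ hθ
    have h1 := hR (z θ) (hzm θ hθ) (hzn θ)
    -- A logarithm of the quotient estimated in `exp_close`, with imaginary part `v θ`.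
    set s : ℂ := -(φ (z θ) * Complex.I) - (k * ((Real.log R : ℝ) + θ * Complex.I)) -
      Complex.log c with hs
    have h2 : Complex.exp (-(φ (z θ) * Complex.I)) / (z θ ^ k * c) = Complex.exp s := by
      rw [hs, Complex.exp_sub, Complex.exp_sub, Complex.exp_log hc0, Complex.exp_nat_mul,
        Complex.exp_add, ← Complex.ofReal_exp, Real.exp_log hR0, div_div]
    have h3 : s.im = v θ := by
      simp [hs, hv, Complex.log_im]
    rw [h2] at h1
    have h4 := (Complex.abs_re_le_norm _).trans_lt h1
    have h5 := (Complex.abs_im_le_norm _).trans_lt h1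
    rw [Complex.sub_re, Complex.one_re, abs_lt] at h4
    rw [Complex.sub_im, Complex.one_im, sub_zero] at h5
    have h6 : |(Complex.exp s).im| < (Complex.exp s).re := by linarith [h4.1]
    rw [Complex.exp_im, Complex.exp_re, h3, abs_mul, abs_of_pos (Real.exp_pos _)] at h6
    exact lt_of_mul_lt_mul_left h6 (Real.exp_pos _).le
  have key := angle_variation (by positivity : (0 : ℝ) ≤ Real.pi / 2) hvc hsec
  obtain ⟨-, a2, a3⟩ := h.range_closure (hzm 0 (left_mem_Icc.mpr (by positivity)))
  obtain ⟨-, b2, b3⟩ := h.range_closure (hzm _ (right_mem_Icc.mpr (by positivity)))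
  have b4 := (gB_nonneg B _).trans b2
  have hk : (2 * (m + 1) + 1 : ℝ) ≤ k := by exact_mod_cast hlt
  simp only [hv] at key
  have := mul_le_mul_of_nonneg_right hk (by positivity : 0 ≤ Real.pi / 2)
  linarith

/-- The function `cosh B - cos φ` is the restriction of an odd polynomial of degree at most
`2(m+1)`. -/
lemma exists_polynomial (h : NormalizedMap a B m φ) :
    ∃ P : Polynomial ℂ, P.natDegree ≤ 2 * (m + 1) ∧ (∀ z, P.eval (-z) = -P.eval z) ∧
      ∀ z ∈ closure Q, P.eval z = (Real.cosh B : ℂ) - Complex.cos (φ z) := by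
  obtain ⟨k, κ, hκ, hg⟩ := exists_growth h.oddExt_differentiable h.oddExt_tendsto
  obtain ⟨P, hP, hPE⟩ := exists_polynomial_of_growth h.oddExt_differentiable hg
  refine ⟨P, hP.trans (h.exponent_le hκ hg), fun z => ?_, fun z hz => ?_⟩
  · rw [hPE, hPE, h.oddExt_neg]
  · rw [hPE, oddExt_of_mem hz]

end NormalizedMap

/-! ### The asymptotic expansion -/

/-- The two-sided bound for `1 / cosh B` at a fixed index. -/
lemma NormalizedMap.bounds {a B : ℝ} {m : ℕ} {φ : ℂ → ℂ} (h : NormalizedMap a B m φ) {ρ C : ℝ}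
    (hρ : ρ = (1 - a) / (1 + a)) (hC : C = 2 / (1 - ρ) ^ 2) :
    1 / Real.cosh B ≤ 2 * ac ρ (m + 1) * (1 + C / (m + 1)) ∧
      2 * ac ρ (m + 1) * (1 - C / (m + 1)) ≤ 1 / Real.cosh B := by
  obtain ⟨P, hdeg, hodd, hP⟩ := h.exists_polynomial
  have hp := Real.cosh_pos B
  have hmem : ∀ x : ℝ, 0 ≤ x → (x : ℂ) ∈ closure Q := by
    intro x hx
    rw [closure_Q]; exact ⟨hx, le_rfl⟩
  have hmem' : ∀ x ∈ Icc a 1, (x : ℂ) ∈ closure Q := fun x hx => hmem x (h.ha0.le.trans hx.1)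
  refine comparison h.ha0 h.ha1 m (Polynomial.C ((1 / Real.cosh B : ℝ) : ℂ) * P)
    ((Polynomial.natDegree_C_mul_le _ _).trans hdeg) (fun z => ?_) (one_div_pos.mpr hp)
    (fun x => (φ x).re) ?_ ?_ ?_ ?_ hρ hC
  · rw [Polynomial.eval_mul, Polynomial.eval_mul, Polynomial.eval_C, Polynomial.eval_C, hodd,
      mul_neg]
  · exact Complex.continuous_re.comp_continuousOn
      (h.cont.comp Complex.continuous_ofReal.continuousOn hmem')
  · rw [h.at_a, Complex.zero_re]
  · rw [Complex.ofReal_one, h.at_one, Complex.ofReal_re]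
  · intro x hx
    have hreal : φ x = ((φ x).re : ℂ) :=
      Complex.ext rfl (by rw [h.real_on_mid hx, Complex.ofReal_im])
    rw [Polynomial.eval_mul, Polynomial.eval_C, hP _ (hmem' x hx)]
    have hc : Complex.cos (φ x) = (Real.cos (φ x).re : ℂ) := by
      rw [Complex.ofReal_cos, ← hreal]
    rw [hc, ← Complex.ofReal_sub, ← Complex.ofReal_mul]
    congr 1
    field_simp

/-- Asymptotics of `B_m(a)`: if for each `m` the map `φ_m` is the normalized conformal
map of the first quadrant onto `Ω_{B_m,m}` with `φ_m(0) = iB_m`, `φ_m(a) = 0` and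
`φ_m(1) = π(m+1)`, then
`B_m = (m + ½) log((1+a)/(1-a)) + ½ log m + ½ log(2a/(1-a²)) + ½ log(2π) + o(1)`. -/
theorem Bm_asymptotics (a : ℝ) (ha0 : 0 < a) (ha1 : a < 1)
    (B : ℕ → ℝ) (φ : ℕ → ℂ → ℂ)
    (hB : ∀ m, 0 < B m)
    (hcont : ∀ m, ContinuousOn (φ m) (closure Q))
    (hmaps : ∀ m, MapsTo (φ m) (closure Q) (closure (ΩBm (B m) m)))
    (hholo : ∀ m, DifferentiableOn ℂ (φ m) Q)
    (hbij : ∀ m, BijOn (φ m) Q (ΩBm (B m) m))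
    (hlim : ∀ m, Tendsto (fun z => ‖φ m z‖)
      (comap (fun z : ℂ => ‖z‖) atTop ⊓ principal Q) atTop)
    (h0 : ∀ m, φ m 0 = (B m : ℂ) * Complex.I)
    (ha : ∀ m, φ m a = 0)
    (h1 : ∀ m, φ m 1 = (Real.pi * (m + 1) : ℝ)) :
    Tendsto (fun m : ℕ =>
        B m - ((m + 1 / 2) * Real.log ((1 + a) / (1 - a)) + (1 / 2) * Real.log m +
          (1 / 2) * Real.log (2 * a / (1 - a ^ 2)) + (1 / 2) * Real.log (2 * Real.pi)))
      atTop (nhds 0) := by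
  have hN : ∀ m, NormalizedMap a (B m) m (φ m) := fun m =>
    { ha0 := ha0, ha1 := ha1, hB := hB m, cont := hcont m, maps := hmaps m, holo := hholo m
      bij := hbij m, lim := hlim m, at_zero := h0 m, at_a := ha m, at_one := h1 m }
  exact final_asymp ha0 ha1 rfl B hB fun m => (hN m).bounds rfl rfl
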